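/- Let r ∈ [0,1), m₁, m₂ ∈ ℝ, m = m₁+m₂. Let Φ ∈ S^r(ℝ^d×ℝ^d) be real-valued, b_j ∈ S^{m_j}(ℝ^d×ℝ^d), and a_j(x,ξ) = e^{iΦ(x,ξ)} b_j(x,ξ) for j = 1,2. Assume there is a compact K₀ ⊆ ℝ^d with a_j(x,ξ) = 0 for all x ∉ K₀ and all ξ. Let A_j = Op(a_j) and A₂* the formal adjoint of A₂ (the operator with amplitude conj(a₂(x',ξ))). Then there exists h ∈ S^m(ℝ^d×ℝ^d) such that A₂*A₁u = Op(h)u for all Schwartz u; explicitly h(x,ξ) = (2π)^{−d} ∫ ( ∫ a₁(y,ξ) conj(a₂(y,ξ+ζ)) e^{i⟨x−y,ζ⟩} dy ) dζ, and for every integer N ≥ 1, h − Σ_{|α|≤N−1} (α!)^{−1} h_α ∈ S^{m−N(1−r)}, where h_α(x,ξ) = D_x^α ( a₁(x,ξ) · conj(∂_ξ^α a₂(x,ξ)) ); moreover h_α ∈ S^{m−|α|(1−r)} for all α. -/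

import Mathlib

open MeasureTheory Filter Topology

noncomputable section

/-- Dot product on `ℝ^d`. -/
def dotp {d : ℕ} (x ξ : Fin d → ℝ) : ℝ := ∑ i, x i * ξ i

/-- Directional derivative of a function between normed spaces. -/
def dirDeriv {E F : Type*} [NormedAddCommGroup E] [NormedSpace ℝ E]
    [NormedAddCommGroup F] [NormedSpace ℝ F] (v : E) (f : E → F) : E → F :=
  fun x => fderiv ℝ f x v

/-- Iterated directional derivatives along a list of directions. -/
def dirDerivList {E F : Type*} [NormedAddCommGroup E] [NormedSpace ℝ E]
    [NormedAddCommGroup F] [NormedSpace ℝ F] : List E → (E → F) → E → F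
  | [], f => f
  | v :: l, f => dirDeriv v (dirDerivList l f)

/-- Multi-index partial derivative `∂^α` with respect to a family of directions. -/
def mpderivB {n : ℕ} {E F : Type*} [NormedAddCommGroup E] [NormedSpace ℝ E]
    [NormedAddCommGroup F] [NormedSpace ℝ F] (b : Fin n → E) (α : Fin n → ℕ)
    (f : E → F) : E → F :=
  dirDerivList ((List.finRange n).flatMap fun i => List.replicate (α i) (b i)) f

/-- Multi-index partial derivative `∂^α` on `ℝ^d`. -/
def mpderiv {d : ℕ} {F : Type*} [NormedAddCommGroup F] [NormedSpace ℝ F]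
    (α : Fin d → ℕ) (f : (Fin d → ℝ) → F) : (Fin d → ℝ) → F :=
  mpderivB (fun i => Pi.single i 1) α f

/-- Order `|α|` of a multi-index. -/
def mOrder {d : ℕ} (α : Fin d → ℕ) : ℕ := ∑ i, α i

/-- Factorial `α!` of a multi-index. -/
def mFactorial {d : ℕ} (α : Fin d → ℕ) : ℕ := ∏ i, (α i).factorial

/-- Power `ζ^α`. -/
def mpow {d : ℕ} (ζ : Fin d → ℝ) (α : Fin d → ℕ) : ℝ := ∏ i, ζ i ^ α i

/-- The finset of multi-indices of order `< N`. -/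
def mIdxLt (d N : ℕ) : Finset (Fin d → ℕ) :=
  (Fintype.piFinset fun _ : Fin d => Finset.range N).filter fun α => mOrder α < N

/-- The finset of multi-indices of order `= N`. -/
def mIdxEq (d N : ℕ) : Finset (Fin d → ℕ) :=
  (Fintype.piFinset fun _ : Fin d => Finset.range (N + 1)).filter fun α => mOrder α = N

/-- Hörmander symbol class `S^m_{ρ,δ}(X × ℝ^d)`. -/
def IsSymbol {d : ℕ} (X : Set (Fin d → ℝ)) (m ρ δ : ℝ)
    (a : (Fin d → ℝ) → (Fin d → ℝ) → ℂ) : Prop :=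
  ContDiffOn ℝ (⊤ : ℕ∞) (fun q : (Fin d → ℝ) × (Fin d → ℝ) => a q.1 q.2) (X ×ˢ Set.univ) ∧
  ∀ (α β : Fin d → ℕ) (K : Set (Fin d → ℝ)), IsCompact K → K ⊆ X →
    ∃ C : ℝ, ∀ x ∈ K, ∀ ξ : Fin d → ℝ,
      ‖mpderiv β (fun y => mpderiv α (fun η => a y η) ξ) x‖ ≤
        C * (1 + ‖ξ‖) ^ (m - ρ * (mOrder α : ℝ) + δ * (mOrder β : ℝ))

/-- Hörmander amplitude class `S^m_{ρ,δ,δ}(X × X × ℝ^d)`. -/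
def IsAmplitude {d : ℕ} (X : Set (Fin d → ℝ)) (m ρ δ : ℝ)
    (a : (Fin d → ℝ) → (Fin d → ℝ) → (Fin d → ℝ) → ℂ) : Prop :=
  ContDiffOn ℝ (⊤ : ℕ∞)
    (fun q : ((Fin d → ℝ) × (Fin d → ℝ)) × (Fin d → ℝ) => a q.1.1 q.1.2 q.2)
    ((X ×ˢ X) ×ˢ Set.univ) ∧
  ∀ (α β β' : Fin d → ℕ) (K : Set (Fin d → ℝ)), IsCompact K → K ⊆ X →
    ∃ C : ℝ, ∀ x ∈ K, ∀ x' ∈ K, ∀ ξ : Fin d → ℝ,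
      ‖mpderiv β (fun y => mpderiv β' (fun y' => mpderiv α (fun η => a y y' η) ξ) x') x‖ ≤
        C * (1 + ‖ξ‖) ^ (m - ρ * (mOrder α : ℝ) + δ * ((mOrder β : ℝ) + (mOrder β' : ℝ)))

/-- `C₀^∞(X)` test functions. -/
def IsTestFun {d : ℕ} (X : Set (Fin d → ℝ)) (u : (Fin d → ℝ) → ℂ) : Prop :=
  ContDiff ℝ (⊤ : ℕ∞) u ∧ HasCompactSupport u ∧ tsupport u ⊆ X

/-- Fourier transform `(2π)^{-d/2} ∫ e^{-i⟨x,ξ⟩} u(x) dx`. -/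
def fourierHat {d : ℕ} (u : (Fin d → ℝ) → ℂ) (ξ : Fin d → ℝ) : ℂ :=
  (((2 * Real.pi) ^ (-(d : ℝ) / 2) : ℝ) : ℂ) *
    ∫ x : Fin d → ℝ, Complex.exp (-(Complex.I * (dotp x ξ : ℂ))) * u x

/-- Pseudo-differential operator with symbol `a`. -/
def Op {d : ℕ} (a : (Fin d → ℝ) → (Fin d → ℝ) → ℂ) (u : (Fin d → ℝ) → ℂ) :
    (Fin d → ℝ) → ℂ := fun x =>
  (((2 * Real.pi) ^ (-(d : ℝ) / 2) : ℝ) : ℂ) *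
    ∫ ξ : Fin d → ℝ, Complex.exp (Complex.I * (dotp x ξ : ℂ)) * a x ξ * fourierHat u ξ

/-- Pseudo-differential operator with amplitude `a` (iterated integral). -/
def OpAmp {d : ℕ} (a : (Fin d → ℝ) → (Fin d → ℝ) → (Fin d → ℝ) → ℂ)
    (u : (Fin d → ℝ) → ℂ) : (Fin d → ℝ) → ℂ := fun x =>
  (((2 * Real.pi) ^ (-(d : ℝ)) : ℝ) : ℂ) *
    ∫ ξ : Fin d → ℝ, ∫ x' : Fin d → ℝ,
      Complex.exp (Complex.I * (dotp (x - x') ξ : ℂ)) * a x x' ξ * u x'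

/-- The formal adjoint `A*` of the PDO with symbol `a`. -/
def OpAdj {d : ℕ} (a : (Fin d → ℝ) → (Fin d → ℝ) → ℂ) (u : (Fin d → ℝ) → ℂ) :
    (Fin d → ℝ) → ℂ := fun x =>
  (((2 * Real.pi) ^ (-(d : ℝ)) : ℝ) : ℂ) *
    ∫ ξ : Fin d → ℝ, ∫ x' : Fin d → ℝ,
      Complex.exp (Complex.I * (dotp (x - x') ξ : ℂ)) * (starRingEnd ℂ) (a x' ξ) * u x'

/-- Gradient of a real-valued function on `ℝ^d`. -/
def gradR {d : ℕ} (f : (Fin d → ℝ) → ℝ) (x : Fin d → ℝ) : Fin d → ℝ :=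
  fun i => fderiv ℝ f x (Pi.single i 1)

end

/-!
The inner integral of `h` is the Fourier transform in `y` of `a₁(y, ξ) conj (a₂(y, ξ + tζ))` at
`t = 1`. Its phase `Φ(y, ξ) - Φ(y, ξ + tζ)` and the `y`-derivatives of this difference are
`O(⟨ζ⟩^r)`, uniformly in `ξ`; since `r < 1`, each integration by parts in `y` gains `⟨ζ⟩^(r - 1)`,
so the transform decays rapidly in `ζ`. Taylor's formula in `t` and Fourier inversion then produce
the terms `h_α`, and the remainder is a superposition of transforms of the same kind in which `a₂`
is replaced by `∂_ξ^α a₂`, a symbol with phase `Φ` of order smaller by `|α| (1 - r)`.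
-/

open scoped ContDiff

/-! ### Iterated directional derivatives -/

section DirectionalDerivatives

variable {E F G : Type*} [NormedAddCommGroup E] [NormedSpace ℝ E]
  [NormedAddCommGroup F] [NormedSpace ℝ F] [NormedAddCommGroup G] [NormedSpace ℝ G]

lemma contDiff_dirDeriv {f : E → F} (hf : ContDiff ℝ ∞ f) (v : E) :
    ContDiff ℝ ∞ (dirDeriv v f) :=
  (hf.fderiv_right (m := ∞) (by simp)).clm_apply contDiff_const

lemma contDiff_dirDerivList {f : E → F} (hf : ContDiff ℝ ∞ f) (l : List E) :
    ContDiff ℝ ∞ (dirDerivList l f) := by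
  induction l with
  | nil => exact hf
  | cons v l ih => exact contDiff_dirDeriv ih v

lemma differentiable_of_smooth {f : E → F} (hf : ContDiff ℝ ∞ f) : Differentiable ℝ f :=
  hf.differentiable (by simp)

lemma dirDeriv_comm {f : E → F} (hf : ContDiff ℝ ∞ f) (v w : E) :
    dirDeriv v (dirDeriv w f) = dirDeriv w (dirDeriv v f) := by
  have hdiff : Differentiable ℝ (fderiv ℝ f) :=
    differentiable_of_smooth (hf.fderiv_right (by simp))
  have second_deriv (x a b : E) :
      dirDeriv a (dirDeriv b f) x = fderiv ℝ (fderiv ℝ f) x a b := by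
    unfold dirDeriv
    rw [fderiv_clm_apply (hdiff x) (differentiableAt_const _)]
    simp
  have hsymm (x : E) : IsSymmSndFDerivAt ℝ f x :=
    hf.contDiffAt.isSymmSndFDerivAt (by
      simp only [minSmoothness_of_isRCLikeNormedField]
      exact WithTop.coe_le_coe.2 le_top)
  funext x
  rw [second_deriv, second_deriv]
  exact hsymm x v w

lemma dirDerivList_append (l l' : List E) (f : E → F) :
    dirDerivList (l ++ l') f = dirDerivList l (dirDerivList l' f) := by
  induction l with
  | nil => rfl
  | cons v l ih => simp only [List.cons_append, dirDerivList, ih]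

lemma dirDerivList_perm {f : E → F} (hf : ContDiff ℝ ∞ f) {l l' : List E}
    (h : l.Perm l') : dirDerivList l f = dirDerivList l' f := by
  induction h with
  | nil => rfl
  | cons v _ ih => simp only [dirDerivList, ih]
  | swap a b l => exact dirDeriv_comm (contDiff_dirDerivList hf l) _ _
  | trans _ _ ih₁ ih₂ => exact ih₁.trans ih₂

lemma dirDerivList_cons_eq_dirDerivList_dirDeriv {f : E → F} (hf : ContDiff ℝ ∞ f) (v : E)
    (l : List E) : dirDerivList (v :: l) f = dirDerivList l (dirDeriv v f) := by
  rw [dirDerivList_perm hf (List.perm_append_singleton v l).symm, dirDerivList_append]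
  rfl

lemma dirDerivList_comp_affine {f : F → G} (hf : ContDiff ℝ ∞ f) (A : E →L[ℝ] F) (b : F)
    (l : List E) :
    dirDerivList l (fun x => f (A x + b)) = fun x => dirDerivList (l.map A) f (A x + b) := by
  induction l with
  | nil => rfl
  | cons v l ih =>
    simp only [dirDerivList, ih, List.map_cons]
    funext x
    have hg := differentiable_of_smooth (contDiff_dirDerivList hf (l.map A)) (A x + b)
    have hA : HasFDerivAt (fun x => A x + b) A x := A.hasFDerivAt.add_const b
    exact congrArg (· v) (hg.hasFDerivAt.comp x hA).fderiv

lemma dirDerivList_clm_comp {f : E → F} (hf : ContDiff ℝ ∞ f) (T : F →L[ℝ] G) (l : List E) :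
    dirDerivList l (fun x => T (f x)) = fun x => T (dirDerivList l f x) := by
  induction l with
  | nil => rfl
  | cons v l ih =>
    simp only [dirDerivList, ih]
    funext x
    have hg := differentiable_of_smooth (contDiff_dirDerivList hf l) x
    exact congrArg (· v) (T.hasFDerivAt.comp x hg.hasFDerivAt).fderiv

lemma dirDeriv_add {f g : E → F} (hf : Differentiable ℝ f) (hg : Differentiable ℝ g) (v : E) :
    dirDeriv v (fun x => f x + g x) = fun x => dirDeriv v f x + dirDeriv v g x := by
  funext x
  exact congrArg (· v) (fderiv_fun_add (hf x) (hg x))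

lemma dirDeriv_mul {𝔸 : Type*} [NormedCommRing 𝔸] [NormedAlgebra ℝ 𝔸] {f g : E → 𝔸}
    (hf : Differentiable ℝ f) (hg : Differentiable ℝ g) (v : E) :
    dirDeriv v (fun x => f x * g x) = fun x => dirDeriv v f x * g x + f x * dirDeriv v g x := by
  funext x
  unfold dirDeriv
  rw [fderiv_fun_mul (hf x) (hg x)]
  simp only [add_apply, smul_apply, smul_eq_mul]
  ring

lemma dirDerivList_add {f g : E → F} (hf : ContDiff ℝ ∞ f) (hg : ContDiff ℝ ∞ g)
    (l : List E) :
    dirDerivList l (fun x => f x + g x) = fun x => dirDerivList l f x + dirDerivList l g x := by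
  induction l with
  | nil => rfl
  | cons v l ih =>
    simp only [dirDerivList, ih]
    exact dirDeriv_add (differentiable_of_smooth (contDiff_dirDerivList hf l))
      (differentiable_of_smooth (contDiff_dirDerivList hg l)) v

lemma dirDerivList_sub {f g : E → F} (hf : ContDiff ℝ ∞ f) (hg : ContDiff ℝ ∞ g) (l : List E) :
    dirDerivList l (fun x => f x - g x) = fun x => dirDerivList l f x - dirDerivList l g x := by
  induction l with
  | nil => rfl
  | cons v l ih =>
    funext x
    rw [dirDerivList, ih]
    exact congrArg (· v) (fderiv_fun_sub (differentiable_of_smooth (contDiff_dirDerivList hf l) x)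
      (differentiable_of_smooth (contDiff_dirDerivList hg l) x))

lemma dirDerivList_eq_zero_of_eqOn_open {f : E → F} {U : Set E} (hU : IsOpen U)
    (h : ∀ x ∈ U, f x = 0) (l : List E) : ∀ x ∈ U, dirDerivList l f x = 0 := by
  induction l with
  | nil => exact h
  | cons v l ih =>
    intro x hx
    have hzero : dirDerivList l f =ᶠ[𝓝 x] fun _ => 0 := by
      filter_upwards [hU.mem_nhds hx] with y hy using ih y hy
    simp only [dirDerivList, dirDeriv, hzero.fderiv_eq, fderiv_fun_const, Pi.zero_apply,
      zero_apply]

lemma dirDerivList_zero (l : List E) : dirDerivList l (fun _ : E => (0 : F)) = fun _ => 0 :=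
  funext fun x => dirDerivList_eq_zero_of_eqOn_open isOpen_univ (fun _ _ => rfl) l x trivial

lemma dirDerivList_const_of_ne_nil (c : F) {l : List E} (hl : l ≠ []) :
    dirDerivList l (fun _ : E => c) = fun _ => 0 := by
  obtain ⟨v, l, rfl⟩ := List.exists_cons_of_ne_nil hl
  have hv : dirDeriv v (fun _ : E => c) = fun _ => 0 := by
    funext x
    simp only [dirDeriv, fderiv_fun_const, Pi.zero_apply, zero_apply]
  rw [dirDerivList_cons_eq_dirDerivList_dirDeriv contDiff_const, hv, dirDerivList_zero]

lemma contDiff_cexp_I_mul {φ : E → ℝ} (hφ : ContDiff ℝ ∞ φ) :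
    ContDiff ℝ ∞ (fun x => Complex.exp (Complex.I * φ x)) :=
  (contDiff_const.mul (Complex.ofRealCLM.contDiff.comp hφ)).cexp

lemma dirDeriv_cexp_I_mul {φ : E → ℝ} (hφ : Differentiable ℝ φ) (v : E) :
    dirDeriv v (fun x => Complex.exp (Complex.I * φ x)) =
      fun x => (Complex.I * dirDeriv v φ x) * Complex.exp (Complex.I * φ x) := by
  funext x
  have h := (((Complex.ofRealCLM.hasFDerivAt.comp x (hφ x).hasFDerivAt).const_mul
    Complex.I).cexp).fderiv
  refine (congrArg (· v) h).trans ?_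
  simp only [dirDeriv, Function.comp_apply, Complex.ofRealCLM_apply, smul_apply,
    ContinuousLinearMap.comp_apply, smul_eq_mul]
  ring

end DirectionalDerivatives

/-! ### Weighted estimates for families of functions -/

lemma exists_norm_mul_le {X R : Type*} [SeminormedRing R] {S : Set X} {f g : X → R} {V W : X → ℝ}
    (hf : ∃ C, 0 ≤ C ∧ ∀ z ∈ S, ‖f z‖ ≤ C * V z) (hg : ∃ C, 0 ≤ C ∧ ∀ z ∈ S, ‖g z‖ ≤ C * W z) :
    ∃ C, 0 ≤ C ∧ ∀ z ∈ S, ‖f z * g z‖ ≤ C * (V z * W z) := by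
  obtain ⟨C, hC, hCf⟩ := hf
  obtain ⟨D, hD, hDg⟩ := hg
  refine ⟨C * D, by positivity, fun z hz => (norm_mul_le _ _).trans ?_⟩
  rw [mul_mul_mul_comm]
  exact mul_le_mul (hCf z hz) (hDg z hz) (norm_nonneg _) ((norm_nonneg _).trans (hCf z hz))

/-- The estimates `∂_L f = O(W · ∏_{i ∈ L} w i)` on `S`, for all lists `L` of at most `n` of the
directions `b i`, and for a family `f` of smooth functions on `E` parametrised by `P`. Symbol
estimates on `E = ℝ^d × ℝ^d`, uniform in parameters, have this form, the weight `w i` being what a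
derivative in the direction `b i` costs. -/
structure WeightedBounds {ι P E F : Type*} [NormedAddCommGroup E] [NormedSpace ℝ E]
    [NormedAddCommGroup F] [NormedSpace ℝ F] (b : ι → E) (S : Set (P × E))
    (w : ι → P × E → ℝ) (n : ℕ) (W : P × E → ℝ) (f : P → E → F) : Prop where
  smooth : ∀ p, ContDiff ℝ ∞ (f p)
  bound : ∀ L : List ι, L.length ≤ n → ∃ C, 0 ≤ C ∧ ∀ z ∈ S,
    ‖dirDerivList (L.map b) (f z.1) z.2‖ ≤ C * (W z * (L.map fun i => w i z).prod)

namespace WeightedBounds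

variable {ι P E F G : Type*} [NormedAddCommGroup E] [NormedSpace ℝ E]
  [NormedAddCommGroup F] [NormedSpace ℝ F] [NormedAddCommGroup G] [NormedSpace ℝ G]
  {b : ι → E} {S : Set (P × E)} {w : ι → P × E → ℝ} {n : ℕ} {W W' : P × E → ℝ} {f g : P → E → F}

lemma of_order_le (h : WeightedBounds b S w n W f) {k : ℕ} (hk : k ≤ n) :
    WeightedBounds b S w k W f :=
  ⟨h.smooth, fun L hL => h.bound L (hL.trans hk)⟩

lemma mono (hw : ∀ i, ∀ z ∈ S, 0 ≤ w i z) (h : WeightedBounds b S w n W f) {A : ℝ} (hA : 0 ≤ A)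
    (hW : ∀ z ∈ S, W z ≤ A * W' z) : WeightedBounds b S w n W' f := by
  refine ⟨h.smooth, fun L hL => ?_⟩
  obtain ⟨C, hC, hf⟩ := h.bound L hL
  refine ⟨C * A, by positivity, fun z hz => (hf z hz).trans ?_⟩
  have hprod : 0 ≤ (L.map fun i => w i z).prod :=
    List.prod_nonneg (List.forall_mem_map.2 fun i _ => hw i z hz)
  calc C * (W z * (L.map fun i => w i z).prod)
      ≤ C * (A * W' z * (L.map fun i => w i z).prod) := by gcongr; exact hW z hz
    _ = C * A * (W' z * (L.map fun i => w i z).prod) := by ring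

lemma congr_weight (hw : ∀ i, ∀ z ∈ S, 0 ≤ w i z) (h : WeightedBounds b S w n W f)
    (hW : ∀ z ∈ S, W z = W' z) : WeightedBounds b S w n W' f :=
  h.mono hw zero_le_one fun z hz => by rw [one_mul, hW z hz]

lemma norm_le (h : WeightedBounds b S w n W f) :
    ∃ C, 0 ≤ C ∧ ∀ z ∈ S, ‖f z.1 z.2‖ ≤ C * W z := by
  simpa [dirDerivList] using h.bound [] (Nat.zero_le n)

lemma of_norm_le (hs : ∀ p, ContDiff ℝ ∞ (f p))
    (h₀ : ∃ C, 0 ≤ C ∧ ∀ z ∈ S, ‖f z.1 z.2‖ ≤ C * W z) : WeightedBounds b S w 0 W f := by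
  refine ⟨hs, fun L hL => ?_⟩
  obtain rfl : L = [] := by simpa using hL
  simpa [dirDerivList] using h₀

lemma deriv (h : WeightedBounds b S w (n + 1) W f) (i : ι) :
    WeightedBounds b S w n (fun z => W z * w i z) (fun p => dirDeriv (b i) (f p)) := by
  refine ⟨fun p => contDiff_dirDeriv (h.smooth p) _, fun L hL => ?_⟩
  obtain ⟨C, hC, hf⟩ := h.bound (i :: L) (Nat.succ_le_succ hL)
  refine ⟨C, hC, fun z hz => ?_⟩
  have := hf z hz
  rwa [List.map_cons, dirDerivList_cons_eq_dirDerivList_dirDeriv (h.smooth _), List.map_cons,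
    List.prod_cons, ← mul_assoc (W z)] at this

lemma of_deriv (hs : ∀ p, ContDiff ℝ ∞ (f p))
    (h₀ : ∃ C, 0 ≤ C ∧ ∀ z ∈ S, ‖f z.1 z.2‖ ≤ C * W z)
    (h : ∀ i, WeightedBounds b S w n (fun z => W z * w i z) (fun p => dirDeriv (b i) (f p))) :
    WeightedBounds b S w (n + 1) W f := by
  refine ⟨hs, fun L hL => ?_⟩
  cases L with
  | nil => simpa [dirDerivList] using h₀
  | cons i L =>
    obtain ⟨C, hC, hf⟩ := (h i).bound L (Nat.le_of_succ_le_succ hL)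
    refine ⟨C, hC, fun z hz => ?_⟩
    rw [List.map_cons, dirDerivList_cons_eq_dirDerivList_dirDeriv (hs _), List.map_cons,
      List.prod_cons, ← mul_assoc (W z)]
    exact hf z hz

lemma add (hf : WeightedBounds b S w n W f) (hg : WeightedBounds b S w n W g) :
    WeightedBounds b S w n W (fun p q => f p q + g p q) := by
  refine ⟨fun p => (hf.smooth p).add (hg.smooth p), fun L hL => ?_⟩
  obtain ⟨C, hC, hCf⟩ := hf.bound L hL
  obtain ⟨C', hC', hCg⟩ := hg.bound L hL
  refine ⟨C + C', by positivity, fun z hz => ?_⟩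
  rw [dirDerivList_add (hf.smooth _) (hg.smooth _), add_mul]
  exact (norm_add_le _ _).trans (add_le_add (hCf z hz) (hCg z hz))

lemma const (hw : ∀ i, ∀ z ∈ S, 0 ≤ w i z) {c : P → F} (hc : ∀ z ∈ S, ‖c z.1‖ ≤ W z) :
    WeightedBounds b S w n W (fun p _ => c p) := by
  refine ⟨fun p => contDiff_const, fun L _ => ⟨1, zero_le_one, fun z hz => ?_⟩⟩
  rcases eq_or_ne L [] with rfl | hL
  · simpa [dirDerivList] using hc z hz
  · rw [dirDerivList_const_of_ne_nil _ (by simpa using hL), norm_zero, one_mul]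
    exact mul_nonneg ((norm_nonneg _).trans (hc z hz))
      (List.prod_nonneg (List.forall_mem_map.2 fun i _ => hw i z hz))

lemma clm_comp (hf : WeightedBounds b S w n W f) (T : F →L[ℝ] G) :
    WeightedBounds b S w n W (fun p q => T (f p q)) := by
  refine ⟨fun p => T.contDiff.comp (hf.smooth p), fun L hL => ?_⟩
  obtain ⟨C, hC, hCf⟩ := hf.bound L hL
  refine ⟨‖T‖ * C, by positivity, fun z hz => ?_⟩
  rw [dirDerivList_clm_comp (hf.smooth _), mul_assoc]
  exact (T.le_opNorm _).trans (mul_le_mul_of_nonneg_left (hCf z hz) (norm_nonneg _))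

section Mul

variable {𝔸 : Type*} [NormedCommRing 𝔸] [NormedAlgebra ℝ 𝔸] {f g : P → E → 𝔸}

lemma mul (hw : ∀ i, ∀ z ∈ S, 0 ≤ w i z) (hf : WeightedBounds b S w n W f)
    (hg : WeightedBounds b S w n W' g) :
    WeightedBounds b S w n (fun z => W z * W' z) (fun p q => f p q * g p q) := by
  induction n generalizing W W' f g with
  | zero =>
    exact of_norm_le (fun p => (hf.smooth p).mul (hg.smooth p))
      (exists_norm_mul_le hf.norm_le hg.norm_le)
  | succ n ih =>
    refine of_deriv (fun p => (hf.smooth p).mul (hg.smooth p))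
      (exists_norm_mul_le hf.norm_le hg.norm_le) fun i => ?_
    have leibniz : (fun p => dirDeriv (b i) fun q => f p q * g p q) = fun p q =>
        dirDeriv (b i) (f p) q * g p q + f p q * dirDeriv (b i) (g p) q :=
      funext fun p => dirDeriv_mul (differentiable_of_smooth (hf.smooth p))
        (differentiable_of_smooth (hg.smooth p)) _
    rw [leibniz]
    refine add ?_ ?_
    · exact (ih (hf.deriv i) (hg.of_order_le n.le_succ)).congr_weight hw fun z _ => by ring
    · exact (ih (hf.of_order_le n.le_succ) (hg.deriv i)).congr_weight hw fun z _ => by ring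

end Mul

lemma cexp_I_mul (hw : ∀ i, ∀ z ∈ S, 0 ≤ w i z) {φ : P → E → ℝ} (hs : ∀ p, ContDiff ℝ ∞ (φ p))
    (hφ : ∀ i n, WeightedBounds b S w n (w i) (fun p => dirDeriv (b i) (φ p))) (n : ℕ) :
    WeightedBounds b S w n (fun _ => 1) (fun p q => Complex.exp (Complex.I * φ p q)) := by
  have hexp := fun p => contDiff_cexp_I_mul (hs p)
  have hnorm : ∃ C : ℝ, 0 ≤ C ∧ ∀ z ∈ S, ‖Complex.exp (Complex.I * φ z.1 z.2)‖ ≤ C * 1 :=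
    ⟨1, zero_le_one, fun z _ => by rw [Complex.norm_exp_I_mul_ofReal, one_mul]⟩
  induction n with
  | zero => exact of_norm_le hexp hnorm
  | succ n ih =>
    refine of_deriv hexp hnorm fun i => ?_
    have chain : (fun p => dirDeriv (b i) fun q => Complex.exp (Complex.I * φ p q)) = fun p q =>
        Complex.I * dirDeriv (b i) (φ p) q * Complex.exp (Complex.I * φ p q) :=
      funext fun p => dirDeriv_cexp_I_mul (differentiable_of_smooth (hs p)) _
    rw [chain]
    exact (((hφ i n).clm_comp
      ((ContinuousLinearMap.mul ℝ ℂ Complex.I).comp Complex.ofRealCLM)).mul hw ih).congr_weight hw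
        fun z _ => mul_comm _ _

end WeightedBounds

/-! ### The weight `1 + ‖ξ‖` -/

/-- The weight `⟨ξ⟩ = 1 + ‖ξ‖` measuring the growth of symbols. -/
def bracket {V : Type*} [NormedAddCommGroup V] (ξ : V) : ℝ := 1 + ‖ξ‖

section Bracket

variable {V : Type*} [NormedAddCommGroup V]

lemma bracket_pos (ξ : V) : 0 < bracket ξ := by unfold bracket; positivity

lemma one_le_bracket (ξ : V) : 1 ≤ bracket ξ := le_add_of_nonneg_right (norm_nonneg ξ)

lemma norm_le_bracket (ξ : V) : ‖ξ‖ ≤ bracket ξ := le_add_of_nonneg_left zero_le_one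

lemma bracket_rpow_nonneg (ξ : V) (s : ℝ) : 0 ≤ bracket ξ ^ s :=
  Real.rpow_nonneg (bracket_pos ξ).le s

lemma bracket_inv_nonneg (ξ : V) : 0 ≤ (bracket ξ)⁻¹ := inv_nonneg.2 (bracket_pos ξ).le

lemma continuous_bracket : Continuous (bracket : V → ℝ) := continuous_const.add continuous_norm

lemma continuous_bracket_rpow (s : ℝ) : Continuous fun ξ : V => bracket ξ ^ s :=
  continuous_bracket.rpow_const fun ξ => Or.inl (bracket_pos ξ).ne'

lemma bracket_rpow_mul_inv_pow (ξ : V) (s : ℝ) (k : ℕ) :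
    bracket ξ ^ s * (bracket ξ)⁻¹ ^ k = bracket ξ ^ (s - k) := by
  rw [Real.rpow_sub (bracket_pos ξ), Real.rpow_natCast, inv_pow, div_eq_mul_inv]

lemma bracket_add_le (ξ η : V) : bracket (ξ + η) ≤ bracket ξ * bracket η := by
  have hnorm := norm_add_le ξ η
  have hprod := mul_nonneg (norm_nonneg ξ) (norm_nonneg η)
  unfold bracket
  linarith

lemma bracket_le_bracket_add_mul (ξ η : V) : bracket ξ ≤ bracket (ξ + η) * bracket η := by
  simpa [bracket] using bracket_add_le (ξ + η) (-η)

lemma bracket_add_inv_le (ξ η : V) : (bracket (ξ + η))⁻¹ ≤ bracket η * (bracket ξ)⁻¹ := by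
  rw [← div_eq_mul_inv, le_div_iff₀ (bracket_pos ξ), inv_mul_le_iff₀ (bracket_pos (ξ + η))]
  exact bracket_le_bracket_add_mul ξ η

theorem peetre_inequality (ξ η : V) (s : ℝ) :
    bracket (ξ + η) ^ s ≤ bracket ξ ^ s * bracket η ^ |s| := by
  rcases le_total 0 s with hs | hs
  · rw [abs_of_nonneg hs, ← Real.mul_rpow (bracket_pos ξ).le (bracket_pos η).le]
    exact Real.rpow_le_rpow (bracket_pos _).le (bracket_add_le ξ η) hs
  · rw [abs_of_nonpos hs, ← div_le_iff₀ (Real.rpow_pos_of_pos (bracket_pos η) _), div_eq_mul_inv,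
      ← Real.rpow_neg (bracket_pos η).le, neg_neg,
      ← Real.mul_rpow (bracket_pos _).le (bracket_pos η).le]
    exact Real.rpow_le_rpow_of_nonpos (bracket_pos ξ) (bracket_le_bracket_add_mul ξ η) hs

variable {G : Type*} [NormedAddCommGroup G]

lemma norm_sub_le_of_bracket_le_two_mul {r A : ℝ} (hr : 0 ≤ r) {k : ℕ} {g : V → G}
    (hA : ∀ η, ‖g η‖ ≤ A * (bracket η ^ r * (bracket η)⁻¹ ^ k)) {ξ η : V}
    (hξ : bracket ξ ≤ 2 * ‖η‖) :
    ‖g (ξ + η) - g ξ‖ ≤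
      A * (3 ^ r + 2 ^ r) * (bracket η ^ r * (bracket η * (bracket ξ)⁻¹) ^ k) := by
  have hA₀ : 0 ≤ A := by simpa [bracket] using (norm_nonneg _).trans (hA 0)
  have hη := bracket_pos η
  have bound_of_le {c : ℝ} (hc : 0 ≤ c) {θ : V} (hr_le : bracket θ ≤ c * bracket η)
      (hk_le : (bracket θ)⁻¹ ≤ bracket η * (bracket ξ)⁻¹) :
      ‖g θ‖ ≤ A * c ^ r * (bracket η ^ r * (bracket η * (bracket ξ)⁻¹) ^ k) := by
    refine (hA θ).trans ?_
    rw [mul_assoc, ← mul_assoc (c ^ r), ← Real.mul_rpow hc hη.le]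
    gcongr
    · exact pow_nonneg (bracket_inv_nonneg θ) k
    · exact (bracket_pos θ).le
    · exact bracket_inv_nonneg θ
  have hfar : ‖g (ξ + η)‖ ≤ A * 3 ^ r * (bracket η ^ r * (bracket η * (bracket ξ)⁻¹) ^ k) := by
    refine bound_of_le (by norm_num) ?_ (bracket_add_inv_le ξ η)
    have := norm_add_le ξ η
    unfold bracket at hξ ⊢
    linarith
  have hnear : ‖g ξ‖ ≤ A * 2 ^ r * (bracket η ^ r * (bracket η * (bracket ξ)⁻¹) ^ k) := by
    refine bound_of_le (by norm_num) ?_ ?_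
    · have := norm_le_bracket η
      linarith
    · exact le_mul_of_one_le_left (bracket_inv_nonneg ξ) (one_le_bracket η)
  calc ‖g (ξ + η) - g ξ‖ ≤ ‖g (ξ + η)‖ + ‖g ξ‖ := norm_sub_le _ _
    _ ≤ _ := add_le_add hfar hnear
    _ = _ := by ring

variable [NormedSpace ℝ V] [NormedSpace ℝ G]

lemma bracket_smul_le {t : ℝ} (ht : t ∈ Set.Icc (0 : ℝ) 1) (ξ : V) :
    bracket (t • ξ) ≤ bracket ξ := by
  unfold bracket
  rw [norm_smul, Real.norm_of_nonneg ht.1]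
  have := mul_le_mul_of_nonneg_right ht.2 (norm_nonneg ξ)
  linarith

lemma bracket_div_four_le_bracket_add_smul {s : ℝ} (hs : s ∈ Set.Icc (0 : ℝ) 1) {ξ η : V}
    (hξ : 2 * ‖η‖ < bracket ξ) : bracket η / 4 ≤ bracket (ξ + s • η) := by
  have hsη : ‖s • η‖ ≤ ‖η‖ := by simpa [bracket] using bracket_smul_le hs η
  have hnonneg := norm_nonneg (ξ + s • η)
  have htri : ‖ξ‖ ≤ ‖ξ + s • η‖ + ‖s • η‖ := by simpa using norm_sub_le (ξ + s • η) (s • η)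
  unfold bracket at hξ ⊢
  linarith

lemma norm_sub_le_of_two_mul_lt_bracket {r B : ℝ} (hr : r ≤ 1) {k : ℕ} {g : V → G}
    (hg : Differentiable ℝ g)
    (hB : ∀ η, ‖fderiv ℝ g η‖ ≤ B * (bracket η ^ r * (bracket η)⁻¹ ^ (k + 1))) {ξ η : V}
    (hξ : 2 * ‖η‖ < bracket ξ) :
    ‖g (ξ + η) - g ξ‖ ≤
      B * 4 ^ (1 - r) * (bracket η ^ r * (bracket η * (bracket ξ)⁻¹) ^ k) := by
  have hB₀ : 0 ≤ B := by simpa [bracket] using (norm_nonneg _).trans (hB 0)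
  have hη := bracket_pos η
  have deriv_bound (θ : V) (hθ : θ ∈ segment ℝ ξ (ξ + η)) : ‖fderiv ℝ g θ‖ ≤
      B * (4 ^ (1 - r) * bracket η ^ (r - 1) * (bracket η * (bracket ξ)⁻¹) ^ k) := by
    obtain ⟨s, hs, rfl⟩ : ∃ s ∈ Set.Icc (0 : ℝ) 1, ξ + s • η = θ := by
      simpa [segment_eq_image'] using hθ
    have hpow : bracket (ξ + s • η) ^ (r - 1) ≤ 4 ^ (1 - r) * bracket η ^ (r - 1) := by
      refine (Real.rpow_le_rpow_of_nonpos (by positivity)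
        (bracket_div_four_le_bracket_add_smul hs hξ) (by linarith)).trans_eq ?_
      rw [Real.div_rpow hη.le (by norm_num), div_eq_inv_mul, ← Real.rpow_neg (by norm_num), neg_sub]
    have hinv : (bracket (ξ + s • η))⁻¹ ≤ bracket η * (bracket ξ)⁻¹ :=
      (bracket_add_inv_le ξ (s • η)).trans
        (mul_le_mul_of_nonneg_right (bracket_smul_le hs η) (bracket_inv_nonneg ξ))
    refine (hB _).trans (mul_le_mul_of_nonneg_left ?_ hB₀)
    rw [pow_succ', ← mul_assoc]
    refine mul_le_mul (le_of_eq_of_le ?_ hpow) (pow_le_pow_left₀ (bracket_inv_nonneg _) hinv k)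
      (pow_nonneg (bracket_inv_nonneg _) k) (by positivity)
    simpa using bracket_rpow_mul_inv_pow (ξ + s • η) r 1
  have mean_value := (convex_segment ξ (ξ + η)).norm_image_sub_le_of_norm_fderiv_le
    (fun θ _ => hg θ) deriv_bound (left_mem_segment ℝ _ _) (right_mem_segment ℝ _ _)
  rw [add_sub_cancel_left] at mean_value
  have hQ : 0 ≤ (bracket η * (bracket ξ)⁻¹) ^ k :=
    pow_nonneg (mul_nonneg hη.le (bracket_inv_nonneg ξ)) k
  calc ‖g (ξ + η) - g ξ‖
      ≤ B * (4 ^ (1 - r) * bracket η ^ (r - 1) * (bracket η * (bracket ξ)⁻¹) ^ k) * bracket η :=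
        mean_value.trans (by gcongr; exact norm_le_bracket η)
    _ = B * 4 ^ (1 - r) * (bracket η ^ (r - 1) * bracket η * (bracket η * (bracket ξ)⁻¹) ^ k) := by
        ring
    _ = _ := by rw [← Real.rpow_add_one hη.ne', sub_add_cancel]

theorem norm_sub_le_bracket {r A B : ℝ} (hr : r ∈ Set.Icc (0 : ℝ) 1) {k : ℕ} {g : V → G}
    (hg : Differentiable ℝ g)
    (hA : ∀ η, ‖g η‖ ≤ A * (bracket η ^ r * (bracket η)⁻¹ ^ k))
    (hB : ∀ η, ‖fderiv ℝ g η‖ ≤ B * (bracket η ^ r * (bracket η)⁻¹ ^ (k + 1))) (ξ η : V) :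
    ‖g (ξ + η) - g ξ‖ ≤ (A * (3 ^ r + 2 ^ r) + B * 4 ^ (1 - r)) *
      (bracket η ^ r * (bracket η * (bracket ξ)⁻¹) ^ k) := by
  have hA₀ : 0 ≤ A := by simpa [bracket] using (norm_nonneg _).trans (hA 0)
  have hB₀ : 0 ≤ B := by simpa [bracket] using (norm_nonneg _).trans (hB 0)
  have hW : 0 ≤ bracket η ^ r * (bracket η * (bracket ξ)⁻¹) ^ k :=
    mul_nonneg (bracket_rpow_nonneg η r)
      (pow_nonneg (mul_nonneg (bracket_pos η).le (bracket_inv_nonneg ξ)) k)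
  rcases le_or_gt (bracket ξ) (2 * ‖η‖) with hξ | hξ
  · refine (norm_sub_le_of_bracket_le_two_mul hr.1 hA hξ).trans
      (mul_le_mul_of_nonneg_right (le_add_of_nonneg_right ?_) hW)
    positivity
  · refine (norm_sub_le_of_two_mul_lt_bracket hr.2 hg hB hξ).trans
      (mul_le_mul_of_nonneg_right (le_add_of_nonneg_left ?_) hW)
    positivity

end Bracket

/-! ### Symbols on phase space -/

section Slices

variable {E V F : Type*} [NormedAddCommGroup E] [NormedSpace ℝ E] [NormedAddCommGroup V]
  [NormedSpace ℝ V] [NormedAddCommGroup F] [NormedSpace ℝ F] {f : E × V → F}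

lemma dirDerivList_slice_snd (hf : ContDiff ℝ ∞ f) (x : E) (l : List V) :
    dirDerivList l (fun η => f (x, η)) =
      fun η => dirDerivList (l.map fun v => ((0 : E), v)) f (x, η) := by
  have h := dirDerivList_comp_affine hf (ContinuousLinearMap.inr ℝ E V) (x, 0) l
  simp only [ContinuousLinearMap.inr_apply, Prod.mk_add_mk, zero_add, add_zero] at h
  exact h

lemma dirDerivList_slice_fst (hf : ContDiff ℝ ∞ f) (ξ : V) (l : List E) :
    dirDerivList l (fun y => f (y, ξ)) =
      fun y => dirDerivList (l.map fun v => (v, (0 : V))) f (y, ξ) := by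
  have h := dirDerivList_comp_affine hf (ContinuousLinearMap.inl ℝ E V) (0, ξ) l
  simp only [ContinuousLinearMap.inl_apply, Prod.mk_add_mk, zero_add, add_zero] at h
  exact h

lemma dirDerivList_comp_add_right {g : E → F} (hg : ContDiff ℝ ∞ g) (b : E) (l : List E) :
    dirDerivList l (fun x => g (x + b)) = fun x => dirDerivList l g (x + b) := by
  simpa using dirDerivList_comp_affine hg (ContinuousLinearMap.id ℝ E) b l

end Slices

section IndexList

variable {d : ℕ}

/-- A multi-index `α` as the list in which each `i` is repeated `α i` times. -/
def indexList (α : Fin d → ℕ) : List (Fin d) :=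
  (List.finRange d).flatMap fun i => List.replicate (α i) i

lemma mpderiv_eq_dirDerivList {F : Type*} [NormedAddCommGroup F] [NormedSpace ℝ F] (α : Fin d → ℕ)
    (f : (Fin d → ℝ) → F) :
    mpderiv α f = dirDerivList ((indexList α).map (Pi.basisFun ℝ (Fin d))) f := by
  simp [mpderiv, mpderivB, indexList, List.map_flatMap]

lemma count_indexList (α : Fin d → ℕ) (i : Fin d) : (indexList α).count i = α i := by
  have hcount : (List.count i ∘ fun j => List.replicate (α j) j) =
      fun j => if j = i then α i else 0 := by
    funext j
    rcases eq_or_ne j i with rfl | h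
    · simp
    · simp [List.count_replicate, h]
  rw [indexList, List.count_flatMap, hcount, ← Fin.sum_univ_def]
  simp

lemma length_indexList (α : Fin d → ℕ) : (indexList α).length = mOrder α := by
  simp [indexList, mOrder, List.length_flatMap, Fin.sum_univ_def]

lemma perm_indexList_count (l : List (Fin d)) : l.Perm (indexList fun i => l.count i) :=
  List.perm_iff_count.2 fun i => (count_indexList (fun j => l.count j) i).symm

end IndexList

section Phase

variable {d : ℕ} {F : Type*} [NormedAddCommGroup F] [NormedSpace ℝ F]

/-- Phase space `ℝ^d × ℝ^d`, with points `(x, ξ)`. -/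
abbrev Phase (d : ℕ) := (Fin d → ℝ) × (Fin d → ℝ)

/-- The standard basis of phase space; `Sum.inl` indexes the base (`x`) directions and `Sum.inr` the
fibre (`ξ`) directions. -/
noncomputable def phaseBasis (d : ℕ) : Module.Basis (Fin d ⊕ Fin d) ℝ (Phase d) :=
  (Pi.basisFun ℝ (Fin d)).prod (Pi.basisFun ℝ (Fin d))

lemma phaseBasis_inl (i : Fin d) :
    phaseBasis d (Sum.inl i) = (Pi.basisFun ℝ (Fin d) i, 0) := by
  simp [phaseBasis, Module.Basis.prod_apply]

lemma phaseBasis_inr (i : Fin d) :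
    phaseBasis d (Sum.inr i) = (0, Pi.basisFun ℝ (Fin d) i) := by
  simp [phaseBasis, Module.Basis.prod_apply]

/-- The iterated partial derivative of `f` along the coordinate directions listed in `L`. -/
noncomputable abbrev phaseDeriv (L : List (Fin d ⊕ Fin d)) (f : Phase d → F) : Phase d → F :=
  dirDerivList (L.map (phaseBasis d)) f

lemma phaseDeriv_nil (f : Phase d → F) : phaseDeriv [] f = f := rfl

lemma phaseDeriv_append (L M : List (Fin d ⊕ Fin d)) (f : Phase d → F) :
    phaseDeriv (L ++ M) f = phaseDeriv L (phaseDeriv M f) := by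
  rw [phaseDeriv, List.map_append, dirDerivList_append]

lemma phaseDeriv_perm {f : Phase d → F} (hf : ContDiff ℝ ∞ f) {L M : List (Fin d ⊕ Fin d)}
    (h : L.Perm M) : phaseDeriv L f = phaseDeriv M f :=
  dirDerivList_perm hf (h.map _)

lemma phaseDeriv_map_inr {f : Phase d → F} (hf : ContDiff ℝ ∞ f) (l : List (Fin d))
    (x ξ : Fin d → ℝ) :
    phaseDeriv (l.map Sum.inr) f (x, ξ) =
      dirDerivList (l.map (Pi.basisFun ℝ (Fin d))) (fun η => f (x, η)) ξ := by
  rw [dirDerivList_slice_snd hf, phaseDeriv, List.map_map, List.map_map]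
  simp only [Function.comp_def, phaseBasis_inr]

lemma phaseDeriv_map_inl {f : Phase d → F} (hf : ContDiff ℝ ∞ f) (l : List (Fin d))
    (x ξ : Fin d → ℝ) :
    phaseDeriv (l.map Sum.inl) f (x, ξ) =
      dirDerivList (l.map (Pi.basisFun ℝ (Fin d))) (fun y => f (y, ξ)) x := by
  rw [dirDerivList_slice_fst hf, phaseDeriv, List.map_map, List.map_map]
  simp only [Function.comp_def, phaseBasis_inl]

lemma mpderiv_snd_eq_phaseDeriv {f : Phase d → F} (hf : ContDiff ℝ ∞ f) (α : Fin d → ℕ)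
    (x ξ : Fin d → ℝ) :
    mpderiv α (fun η => f (x, η)) ξ = phaseDeriv ((indexList α).map Sum.inr) f (x, ξ) := by
  rw [mpderiv_eq_dirDerivList, phaseDeriv_map_inr hf]

lemma mpderiv_fst_eq_phaseDeriv {f : Phase d → F} (hf : ContDiff ℝ ∞ f) (α : Fin d → ℕ)
    (x ξ : Fin d → ℝ) :
    mpderiv α (fun y => f (y, ξ)) x = phaseDeriv ((indexList α).map Sum.inl) f (x, ξ) := by
  rw [mpderiv_eq_dirDerivList, phaseDeriv_map_inl hf]

lemma mpderiv_mpderiv_eq_phaseDeriv {f : Phase d → F} (hf : ContDiff ℝ ∞ f) (α β : Fin d → ℕ)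
    (x ξ : Fin d → ℝ) :
    mpderiv β (fun y => mpderiv α (fun η => f (y, η)) ξ) x =
      phaseDeriv ((indexList β).map Sum.inl ++ (indexList α).map Sum.inr) f (x, ξ) := by
  simp_rw [mpderiv_snd_eq_phaseDeriv hf]
  rw [mpderiv_fst_eq_phaseDeriv (contDiff_dirDerivList hf _), phaseDeriv_append]

/-- The number of derivatives in base directions. -/
abbrev baseCount (L : List (Fin d ⊕ Fin d)) : ℕ := L.countP Sum.isLeft

/-- The number of derivatives in fibre directions. -/
abbrev fibreCount (L : List (Fin d ⊕ Fin d)) : ℕ := L.countP Sum.isRight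

lemma fibreCount_cons_inl (i : Fin d) (L : List (Fin d ⊕ Fin d)) :
    fibreCount (Sum.inl i :: L) = fibreCount L :=
  List.countP_cons_of_neg (by simp)

lemma fibreCount_cons_inr (i : Fin d) (L : List (Fin d ⊕ Fin d)) :
    fibreCount (Sum.inr i :: L) = fibreCount L + 1 :=
  List.countP_cons_of_pos rfl

lemma fibreCount_append (L M : List (Fin d ⊕ Fin d)) :
    fibreCount (L ++ M) = fibreCount L + fibreCount M :=
  List.countP_append

lemma fibreCount_perm {L M : List (Fin d ⊕ Fin d)} (h : L.Perm M) : fibreCount L = fibreCount M :=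
  h.countP_eq _

lemma fibreCount_append_map (l l' : List (Fin d)) :
    fibreCount (l'.map Sum.inl ++ l.map Sum.inr) = l.length := by
  rw [fibreCount_append, fibreCount, fibreCount, List.countP_map, List.countP_map]
  simp [Function.comp_def]

lemma exists_perm_append_map (L : List (Fin d ⊕ Fin d)) :
    ∃ l l' : List (Fin d), L.Perm (l'.map Sum.inl ++ l.map Sum.inr) := by
  induction L with
  | nil => exact ⟨[], [], .refl _⟩
  | cons i L ih =>
    obtain ⟨l, l', h⟩ := ih
    cases i with
    | inl i => exact ⟨l, i :: l', h.cons _⟩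
    | inr i => exact ⟨i :: l, l', (h.cons _).trans List.perm_middle.symm⟩

lemma exists_perm_indexList (L : List (Fin d ⊕ Fin d)) :
    ∃ α β : Fin d → ℕ, L.Perm ((indexList β).map Sum.inl ++ (indexList α).map Sum.inr) := by
  obtain ⟨l, l', h⟩ := exists_perm_append_map L
  exact ⟨_, _, h.trans (((perm_indexList_count l').map _).append ((perm_indexList_count l).map _))⟩

/-- The weight equal to `u` in the base directions and to `v` in the fibre directions. -/
def splitWeight {X : Type*} (u v : X → ℝ) : Fin d ⊕ Fin d → X → ℝ :=
  Sum.elim (fun _ => u) fun _ => v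

lemma splitWeight_nonneg {X : Type*} {u v : X → ℝ} {S : Set X} (hu : ∀ z ∈ S, 0 ≤ u z)
    (hv : ∀ z ∈ S, 0 ≤ v z) (i : Fin d ⊕ Fin d) : ∀ z ∈ S, 0 ≤ splitWeight u v i z := by
  cases i with
  | inl i => exact hu
  | inr i => exact hv

lemma prod_splitWeight {X : Type*} (u v : X → ℝ) (L : List (Fin d ⊕ Fin d)) (z : X) :
    (L.map fun i => splitWeight u v i z).prod = u z ^ baseCount L * v z ^ fibreCount L := by
  induction L with
  | nil => simp
  | cons i L ih =>
    rw [List.map_cons, List.prod_cons, ih]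
    cases i <;> simp [splitWeight, List.countP_cons, pow_succ] <;> ring

/-- What derivatives of a symbol of type `(1, 0)` gain: `⟨ξ⟩⁻¹` in each fibre direction. -/
noncomputable def symbolWeight : Fin d ⊕ Fin d → Unit × Phase d → ℝ :=
  splitWeight (fun _ => 1) fun z => (bracket z.2.2)⁻¹

/-- The symbol class `S^m = S^m_{1,0}` for functions on phase space with values in a normed space;
see `isSymbol_iff_isPhaseSymbol`. -/
def IsPhaseSymbol (m : ℝ) (f : Phase d → F) : Prop :=
  ∀ K : Set (Fin d → ℝ), IsCompact K → ∀ n, WeightedBounds (phaseBasis d)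
    {z | z.2.1 ∈ K} symbolWeight n (fun z => bracket z.2.2 ^ m) fun _ : Unit => f

lemma symbolWeight_nonneg (S : Set (Unit × Phase d)) :
    ∀ i, ∀ z ∈ S, 0 ≤ symbolWeight i z :=
  splitWeight_nonneg (fun _ _ => zero_le_one) fun _ _ => bracket_inv_nonneg _

lemma isPhaseSymbol_iff {m : ℝ} {f : Phase d → F} :
    IsPhaseSymbol m f ↔ ContDiff ℝ ∞ f ∧ ∀ K : Set (Fin d → ℝ), IsCompact K →
      ∀ L, ∃ C, 0 ≤ C ∧ ∀ x ∈ K, ∀ ξ,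
        ‖phaseDeriv L f (x, ξ)‖ ≤ C * (bracket ξ ^ m * (bracket ξ)⁻¹ ^ fibreCount L) := by
  constructor
  · refine fun h => ⟨(h ∅ isCompact_empty 0).smooth (), fun K hK L => ?_⟩
    obtain ⟨C, hC, hf⟩ := (h K hK L.length).bound L le_rfl
    refine ⟨C, hC, fun x hx ξ => (hf ((), x, ξ) hx).trans_eq ?_⟩
    rw [symbolWeight, prod_splitWeight, one_pow, one_mul]
  · refine fun ⟨hs, h⟩ K hK n => ⟨fun _ => hs, fun L _ => ?_⟩
    obtain ⟨C, hC, hf⟩ := h K hK L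
    refine ⟨C, hC, fun z hz => (hf z.2.1 hz z.2.2).trans_eq ?_⟩
    rw [symbolWeight, prod_splitWeight, one_pow, one_mul]

theorem isSymbol_iff_isPhaseSymbol {m : ℝ} {a : (Fin d → ℝ) → (Fin d → ℝ) → ℂ} :
    IsSymbol Set.univ m 1 0 a ↔ IsPhaseSymbol m fun q => a q.1 q.2 := by
  have exponent (α β : Fin d → ℕ) (ξ : Fin d → ℝ) :
      (1 + ‖ξ‖) ^ (m - 1 * (mOrder α : ℝ) + 0 * (mOrder β : ℝ)) =
        bracket ξ ^ m * (bracket ξ)⁻¹ ^ mOrder α := by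
    rw [bracket_rpow_mul_inv_pow, one_mul, zero_mul, add_zero, bracket]
  rw [IsSymbol, Set.univ_prod_univ, contDiffOn_univ, isPhaseSymbol_iff]
  refine and_congr_right fun hs => ⟨fun h K hK L => ?_, fun h α β K hK _ => ?_⟩
  · obtain ⟨α, β, hL⟩ := exists_perm_indexList L
    obtain ⟨C, hC⟩ := h α β K hK (Set.subset_univ K)
    refine ⟨|C|, abs_nonneg C, fun x hx ξ => ?_⟩
    rw [phaseDeriv_perm hs hL, ← mpderiv_mpderiv_eq_phaseDeriv hs,
      fibreCount_perm hL, fibreCount_append_map, length_indexList, ← exponent α β]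
    exact (hC x hx ξ).trans (mul_le_mul_of_nonneg_right (le_abs_self C) (bracket_rpow_nonneg ξ _))
  · obtain ⟨C, -, hC⟩ := h K hK ((indexList β).map Sum.inl ++ (indexList α).map Sum.inr)
    refine ⟨C, fun x hx ξ => ?_⟩
    rw [mpderiv_mpderiv_eq_phaseDeriv hs, exponent, ← length_indexList α,
      ← fibreCount_append_map _ (indexList β)]
    exact hC x hx ξ

end Phase

namespace IsPhaseSymbol

variable {d : ℕ} {F G : Type*} [NormedAddCommGroup F] [NormedSpace ℝ F] [NormedAddCommGroup G]
  [NormedSpace ℝ G] {m m' : ℝ} {f g : Phase d → F}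

lemma smooth (hf : IsPhaseSymbol m f) : ContDiff ℝ ∞ f := (isPhaseSymbol_iff.1 hf).1

lemma mul {𝔸 : Type*} [NormedCommRing 𝔸] [NormedAlgebra ℝ 𝔸] {f g : Phase d → 𝔸}
    (hf : IsPhaseSymbol m f) (hg : IsPhaseSymbol m' g) :
    IsPhaseSymbol (m + m') fun q => f q * g q := fun K hK n =>
  (WeightedBounds.mul (symbolWeight_nonneg _) (hf K hK n) (hg K hK n)).congr_weight
    (symbolWeight_nonneg _) fun _ _ => (Real.rpow_add (bracket_pos _) m m').symm

lemma mono (hf : IsPhaseSymbol m f) (h : m ≤ m') : IsPhaseSymbol m' f := fun K hK n =>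
  (hf K hK n).mono (symbolWeight_nonneg _) zero_le_one fun _ _ => by
    rw [one_mul]
    exact Real.rpow_le_rpow_of_exponent_le (one_le_bracket _) h

lemma add (hf : IsPhaseSymbol m f) (hg : IsPhaseSymbol m g) : IsPhaseSymbol m fun q => f q + g q :=
  fun K hK n => (hf K hK n).add (hg K hK n)

lemma clm_comp (hf : IsPhaseSymbol m f) (T : F →L[ℝ] G) : IsPhaseSymbol m fun q => T (f q) :=
  fun K hK n => (hf K hK n).clm_comp T

lemma const_mul {f : Phase d → ℂ} (hf : IsPhaseSymbol m f) (c : ℂ) :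
    IsPhaseSymbol m fun q => c * f q :=
  hf.clm_comp (ContinuousLinearMap.mul ℝ ℂ c)

lemma conj {f : Phase d → ℂ} (hf : IsPhaseSymbol m f) :
    IsPhaseSymbol m fun q => (starRingEnd ℂ) (f q) :=
  hf.clm_comp (Complex.conjCLE : ℂ →L[ℝ] ℂ)

lemma zero (m : ℝ) : IsPhaseSymbol (d := d) m fun _ => (0 : F) := fun _ _ _ =>
  .const (symbolWeight_nonneg _) fun _ _ => by simpa using bracket_rpow_nonneg _ m

lemma sum {ι : Type*} (s : Finset ι) {f : ι → Phase d → F}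
    (hf : ∀ i ∈ s, IsPhaseSymbol m (f i)) : IsPhaseSymbol m fun q => ∑ i ∈ s, f i q := by
  classical
  induction s using Finset.induction_on with
  | empty => exact .zero m
  | insert i s hi ih =>
    simp only [Finset.sum_insert hi]
    exact (hf i (s.mem_insert_self i)).add (ih fun j hj => hf j (Finset.mem_insert_of_mem hj))

lemma deriv (hf : IsPhaseSymbol m f) (L : List (Fin d ⊕ Fin d)) :
    IsPhaseSymbol (m - fibreCount L) (phaseDeriv L f) := by
  rw [isPhaseSymbol_iff] at hf ⊢
  refine ⟨contDiff_dirDerivList hf.1 _, fun K hK M => ?_⟩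
  obtain ⟨C, hC, hCf⟩ := hf.2 K hK (M ++ L)
  refine ⟨C, hC, fun x hx ξ => ?_⟩
  rw [← phaseDeriv_append]
  refine (hCf x hx ξ).trans_eq ?_
  rw [fibreCount_append, pow_add, mul_comm (_ ^ fibreCount M), ← mul_assoc (bracket ξ ^ m),
    bracket_rpow_mul_inv_pow]

end IsPhaseSymbol

/-! ### Phase differences and cross amplitudes -/

section PhaseDifference

variable {d : ℕ} {F : Type*} [NormedAddCommGroup F] [NormedSpace ℝ F] {r m : ℝ}

theorem IsPhaseSymbol.exists_norm_phaseDeriv_add_sub_le {f : Phase d → F} (hf : IsPhaseSymbol r f)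
    (hr : r ∈ Set.Icc (0 : ℝ) 1) {K : Set (Fin d → ℝ)} (hK : IsCompact K)
    (L : List (Fin d ⊕ Fin d)) :
    ∃ C, 0 ≤ C ∧ ∀ y ∈ K, ∀ ξ ζ, ‖phaseDeriv L f (y, ξ + ζ) - phaseDeriv L f (y, ξ)‖ ≤
      C * (bracket ζ ^ r * (bracket ζ * (bracket ξ)⁻¹) ^ fibreCount L) := by
  obtain ⟨A, hA, hAf⟩ := (isPhaseSymbol_iff.1 hf).2 K hK L
  choose B hB hBf using fun j => (isPhaseSymbol_iff.1 hf).2 K hK (Sum.inr j :: L)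
  have hsmooth : ContDiff ℝ ∞ (phaseDeriv L f) := contDiff_dirDerivList hf.smooth _
  have hfibre (y : Fin d → ℝ) : ContDiff ℝ ∞ fun η => phaseDeriv L f (y, η) :=
    hsmooth.comp (contDiff_const.prodMk contDiff_id)
  have hpartial (y η : Fin d → ℝ) (j : Fin d) :
      fderiv ℝ (fun η => phaseDeriv L f (y, η)) η (Pi.basisFun ℝ (Fin d) j) =
        phaseDeriv (Sum.inr j :: L) f (y, η) := by
    have h := congrFun (dirDerivList_slice_snd hsmooth y [Pi.basisFun ℝ (Fin d) j]) η
    simpa only [phaseDeriv, dirDerivList, dirDeriv, List.map_cons, List.map_nil, phaseBasis_inr]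
      using h
  set M : ℝ := Fintype.card (Fin d) •
    ‖(Pi.basisFun ℝ (Fin d)).equivFunL.toContinuousLinearMap‖
  have : 0 ≤ M := nsmul_nonneg (norm_nonneg _) _
  have hB₀ : 0 ≤ ∑ j, B j := Finset.sum_nonneg fun j _ => hB j
  refine ⟨A * (3 ^ r + 2 ^ r) + M * (∑ j, B j) * 4 ^ (1 - r), by positivity, fun y hy ξ ζ => ?_⟩
  refine norm_sub_le_bracket hr (g := fun η => phaseDeriv L f (y, η))
    (differentiable_of_smooth (hfibre y)) (hAf y hy) (fun η => ?_) ξ ζ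
  have hW : 0 ≤ bracket η ^ r * (bracket η)⁻¹ ^ (fibreCount L + 1) :=
    mul_nonneg (bracket_rpow_nonneg η r) (pow_nonneg (bracket_inv_nonneg η) _)
  rw [mul_assoc]
  refine (Pi.basisFun ℝ (Fin d)).opNorm_le (mul_nonneg hB₀ hW) fun j => ?_
  rw [hpartial]
  calc ‖phaseDeriv (Sum.inr j :: L) f (y, η)‖
      ≤ B j * (bracket η ^ r * (bracket η)⁻¹ ^ (fibreCount L + 1)) :=
        (hBf j y hy η).trans_eq (by rw [fibreCount_cons_inr])
    _ ≤ _ := mul_le_mul_of_nonneg_right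
        (Finset.single_le_sum (fun i _ => hB i) (Finset.mem_univ j)) hW

/-- The points `((ζ, t), (y, ξ))` with `t ∈ [0, 1]` and `y ∈ K`. The parameter `ζ` is a frequency
and `t` the position on the segment from `ξ` to `ξ + ζ`. -/
def paramRegion (K : Set (Fin d → ℝ)) : Set (((Fin d → ℝ) × ℝ) × Phase d) :=
  {z | z.1.2 ∈ Set.Icc (0 : ℝ) 1 ∧ z.2.1 ∈ K}

/-- What derivatives of `a₁(y, ξ) conj (a₂(y, ξ + tζ))` cost: `⟨ζ⟩^r` in base directions, and
`⟨ζ⟩² ⟨ξ⟩⁻¹` in fibre directions. -/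
noncomputable def crossWeight (r : ℝ) : Fin d ⊕ Fin d → ((Fin d → ℝ) × ℝ) × Phase d → ℝ :=
  splitWeight (fun z => bracket z.1.1 ^ r) fun z => bracket z.1.1 ^ 2 * (bracket z.2.2)⁻¹

lemma crossWeight_nonneg (r : ℝ) (S : Set (((Fin d → ℝ) × ℝ) × Phase d)) :
    ∀ i, ∀ z ∈ S, 0 ≤ crossWeight r i z :=
  splitWeight_nonneg (fun _ _ => bracket_rpow_nonneg _ r)
    fun _ _ => mul_nonneg (pow_nonneg (bracket_pos _).le 2) (bracket_inv_nonneg _)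

lemma pow_fibreCount_le_prod_crossWeight (hr : 0 ≤ r) (L : List (Fin d ⊕ Fin d))
    (z : ((Fin d → ℝ) × ℝ) × Phase d) :
    (bracket z.1.1 * (bracket z.2.2)⁻¹) ^ fibreCount L ≤
      (L.map fun i => crossWeight r i z).prod := by
  have hinv := bracket_inv_nonneg z.2.2
  have hbase : 1 ≤ (bracket z.1.1 ^ r) ^ baseCount L :=
    one_le_pow₀ (Real.one_le_rpow (one_le_bracket _) hr)
  have hfibre : (bracket z.1.1 * (bracket z.2.2)⁻¹) ^ fibreCount L ≤
      (bracket z.1.1 ^ 2 * (bracket z.2.2)⁻¹) ^ fibreCount L :=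
    pow_le_pow_left₀ (mul_nonneg (bracket_pos _).le hinv)
      (mul_le_mul_of_nonneg_right (le_self_pow₀ (one_le_bracket _) two_ne_zero) hinv) _
  rw [crossWeight, prod_splitWeight]
  exact hfibre.trans (le_mul_of_one_le_left
    (pow_nonneg (mul_nonneg (pow_nonneg (bracket_pos _).le 2) hinv) _) hbase)

lemma IsPhaseSymbol.weightedBounds_translate {f : Phase d → F} (hf : IsPhaseSymbol m f)
    (hr : 0 ≤ r) {σ : (Fin d → ℝ) × ℝ → Fin d → ℝ}
    (hσ : ∀ p : (Fin d → ℝ) × ℝ, p.2 ∈ Set.Icc (0 : ℝ) 1 → bracket (σ p) ≤ bracket p.1)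
    {K : Set (Fin d → ℝ)} (hK : IsCompact K) (n : ℕ) :
    WeightedBounds (phaseBasis d) (paramRegion K) (crossWeight r) n
      (fun z => bracket z.2.2 ^ m * bracket z.1.1 ^ |m|) fun p q => f (q + (0, σ p)) := by
  refine ⟨fun p => hf.smooth.comp (contDiff_id.add contDiff_const), fun L _ => ?_⟩
  obtain ⟨C, hC, hCf⟩ := (isPhaseSymbol_iff.1 hf).2 K hK L
  refine ⟨C, hC, fun ⟨⟨ζ, t⟩, y, ξ⟩ ⟨ht, hy⟩ => ?_⟩
  have hshift := hσ (ζ, t) ht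
  rw [dirDerivList_comp_add_right hf.smooth]
  simp only [Prod.mk_add_mk, add_zero]
  refine (hCf y hy _).trans (mul_le_mul_of_nonneg_left (mul_le_mul ?_ ?_
    (pow_nonneg (bracket_inv_nonneg _) _)
    (mul_nonneg (bracket_rpow_nonneg ξ m) (bracket_rpow_nonneg ζ _))) hC)
  · exact (peetre_inequality ξ (σ (ζ, t)) m).trans (mul_le_mul_of_nonneg_left
      (Real.rpow_le_rpow (bracket_pos _).le hshift (abs_nonneg m)) (bracket_rpow_nonneg ξ m))
  · refine le_trans (pow_le_pow_left₀ (bracket_inv_nonneg _) ?_ _)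
      (pow_fibreCount_le_prod_crossWeight hr L ((ζ, t), y, ξ))
    exact (bracket_add_inv_le ξ _).trans
      (mul_le_mul_of_nonneg_right hshift (bracket_inv_nonneg ξ))

lemma bracket_rpow_mul_pow_fibreCount_cons_le (hr : r ∈ Set.Icc (0 : ℝ) 1) (i : Fin d ⊕ Fin d)
    (L : List (Fin d ⊕ Fin d)) (z : ((Fin d → ℝ) × ℝ) × Phase d) :
    bracket z.1.1 ^ r * (bracket z.1.1 * (bracket z.2.2)⁻¹) ^ fibreCount (i :: L) ≤
      crossWeight r i z * (L.map fun i => crossWeight r i z).prod := by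
  have hprod := pow_fibreCount_le_prod_crossWeight hr.1 L z
  have hζ := (bracket_pos z.1.1).le
  have hpow : 0 ≤ (bracket z.1.1 * (bracket z.2.2)⁻¹) ^ fibreCount L :=
    pow_nonneg (mul_nonneg hζ (bracket_inv_nonneg _)) _
  cases i with
  | inl i =>
    rw [fibreCount_cons_inl]
    exact mul_le_mul_of_nonneg_left hprod (bracket_rpow_nonneg _ r)
  | inr i =>
    rw [fibreCount_cons_inr, pow_succ', ← mul_assoc]
    refine mul_le_mul ?_ hprod hpow (crossWeight_nonneg r Set.univ (Sum.inr i) z trivial)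
    rw [crossWeight, splitWeight, Sum.elim_inr, sq, ← mul_assoc]
    refine mul_le_mul_of_nonneg_right (mul_le_mul_of_nonneg_right ?_ hζ) (bracket_inv_nonneg _)
    simpa using Real.rpow_le_rpow_of_exponent_le (one_le_bracket z.1.1) hr.2

lemma IsPhaseSymbol.weightedBounds_cexp_sub {φ : Phase d → ℝ} (hφ : IsPhaseSymbol r φ)
    (hr : r ∈ Set.Icc (0 : ℝ) 1) {K : Set (Fin d → ℝ)} (hK : IsCompact K) (n : ℕ) :
    WeightedBounds (phaseBasis d) (paramRegion K) (crossWeight r) n (fun _ => 1) fun p q =>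
      Complex.exp (Complex.I * ((φ q - φ (q + (0, p.2 • p.1)) : ℝ) : ℂ)) := by
  have hshift (p : (Fin d → ℝ) × ℝ) : ContDiff ℝ ∞ fun q : Phase d => φ (q + (0, p.2 • p.1)) :=
    hφ.smooth.comp (contDiff_id.add contDiff_const)
  have hdiff (p : (Fin d → ℝ) × ℝ) := hφ.smooth.sub (hshift p)
  refine WeightedBounds.cexp_I_mul (crossWeight_nonneg r _) hdiff
    (fun i n => ⟨fun p => contDiff_dirDeriv (hdiff p) _, fun L _ => ?_⟩) n
  obtain ⟨C, hC, hCφ⟩ := hφ.exists_norm_phaseDeriv_add_sub_le hr hK (i :: L)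
  refine ⟨C, hC, fun ⟨⟨ζ, t⟩, y, ξ⟩ ⟨ht, hy⟩ => ?_⟩
  rw [← dirDerivList_cons_eq_dirDerivList_dirDeriv (hdiff _), ← List.map_cons,
    dirDerivList_sub hφ.smooth (hshift _), dirDerivList_comp_add_right hφ.smooth, norm_sub_rev]
  simp only [Prod.mk_add_mk, add_zero]
  refine (hCφ y hy ξ (t • ζ)).trans (mul_le_mul_of_nonneg_left ?_ hC)
  refine le_trans ?_ (bracket_rpow_mul_pow_fibreCount_cons_le hr i L ((ζ, t), y, ξ))
  have hsmul := bracket_smul_le ht ζ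
  have hsmul₀ := (bracket_pos (t • ζ)).le
  have hξ := bracket_inv_nonneg ξ
  have hr₀ := hr.1
  gcongr
  exact bracket_rpow_nonneg ζ r

end PhaseDifference

section Oscillatory

variable {d : ℕ} {r m m₁ m₂ : ℝ} {φ : Phase d → ℝ} {a a₁ a₂ : Phase d → ℂ}

/-- The class `e^{iφ} S^m` of oscillatory symbols with real phase `φ`. -/
def IsOscillatory (φ : Phase d → ℝ) (m : ℝ) (a : Phase d → ℂ) : Prop :=
  ∃ b, IsPhaseSymbol m b ∧ a = fun q => Complex.exp (Complex.I * φ q) * b q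

lemma IsOscillatory.smooth (ha : IsOscillatory φ m a) (hφ : ContDiff ℝ ∞ φ) : ContDiff ℝ ∞ a := by
  obtain ⟨b, hb, rfl⟩ := ha
  exact (contDiff_cexp_I_mul hφ).mul hb.smooth

lemma IsOscillatory.exists_norm_le (ha : IsOscillatory φ m a) {K : Set (Fin d → ℝ)}
    (hK : IsCompact K) : ∃ C, 0 ≤ C ∧ ∀ y ∈ K, ∀ ξ, ‖a (y, ξ)‖ ≤ C * bracket ξ ^ m := by
  obtain ⟨b, hb, rfl⟩ := ha
  obtain ⟨C, hC, hCb⟩ := (isPhaseSymbol_iff.1 hb).2 K hK []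
  refine ⟨C, hC, fun y hy ξ => ?_⟩
  rw [norm_mul, Complex.norm_exp_I_mul_ofReal, one_mul]
  simpa [phaseDeriv_nil] using hCb y hy ξ

theorem IsOscillatory.mul_conj (ha₁ : IsOscillatory φ m₁ a₁) (ha₂ : IsOscillatory φ m₂ a₂) :
    IsPhaseSymbol (m₁ + m₂) fun q => a₁ q * (starRingEnd ℂ) (a₂ q) := by
  obtain ⟨b₁, hb₁, rfl⟩ := ha₁
  obtain ⟨b₂, hb₂, rfl⟩ := ha₂
  convert! hb₁.mul hb₂.conj using 2
  rw [map_mul, mul_mul_mul_comm, Complex.mul_conj, Complex.normSq_eq_norm_sq,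
    Complex.norm_exp_I_mul_ofReal, one_pow, Complex.ofReal_one, one_mul]

theorem IsOscillatory.phaseDeriv_map_inr (ha : IsOscillatory φ m a) (hφ : IsPhaseSymbol r φ)
    (hr : 0 ≤ r) (l : List (Fin d)) :
    IsOscillatory φ (m - l.length * (1 - r)) (phaseDeriv (l.map Sum.inr) a) := by
  induction l with
  | nil => simpa [phaseDeriv_nil] using ha
  | cons i l ih =>
    obtain ⟨c, hc, hphase⟩ := ih
    have hcount : fibreCount [Sum.inr i] = 1 := rfl
    have hφi := hφ.deriv [Sum.inr i]
    have hci := hc.deriv [Sum.inr i]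
    refine ⟨fun q => phaseDeriv [Sum.inr i] c q +
      Complex.I * (((phaseDeriv [Sum.inr i] φ q : ℝ) : ℂ) * c q), .add (hci.mono ?_)
        ((((hφi.clm_comp Complex.ofRealCLM).mul hc).mono (le_of_eq ?_)).const_mul _), ?_⟩
    · rw [hcount, List.length_cons]
      push_cast
      linarith
    · rw [hcount, List.length_cons]
      push_cast
      ring
    · rw [List.map_cons, ← List.singleton_append, phaseDeriv_append, hphase]
      simp only [phaseDeriv, List.map_cons, List.map_nil, dirDerivList]
      rw [dirDeriv_mul (differentiable_of_smooth (contDiff_cexp_I_mul hφ.smooth))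
        (differentiable_of_smooth hc.smooth),
        dirDeriv_cexp_I_mul (differentiable_of_smooth hφ.smooth)]
      funext q
      ring

/-- The amplitude `a₁(y, ξ) conj (a₂(y, ξ + tζ))`, as a family indexed by `p = (ζ, t)`. -/
noncomputable def crossAmplitude (a₁ a₂ : Phase d → ℂ) (p : (Fin d → ℝ) × ℝ) (q : Phase d) : ℂ :=
  a₁ q * (starRingEnd ℂ) (a₂ (q + (0, p.2 • p.1)))

theorem IsOscillatory.weightedBounds_crossAmplitude (ha₁ : IsOscillatory φ m₁ a₁)
    (ha₂ : IsOscillatory φ m₂ a₂) (hφ : IsPhaseSymbol r φ) (hr : r ∈ Set.Icc (0 : ℝ) 1)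
    {K : Set (Fin d → ℝ)} (hK : IsCompact K) (n : ℕ) :
    WeightedBounds (phaseBasis d) (paramRegion K) (crossWeight r) n
      (fun z => bracket z.2.2 ^ (m₁ + m₂) * bracket z.1.1 ^ (|m₁| + |m₂|))
      (crossAmplitude a₁ a₂) := by
  obtain ⟨b₁, hb₁, rfl⟩ := ha₁
  obtain ⟨b₂, hb₂, rfl⟩ := ha₂
  have hw := crossWeight_nonneg (d := d) r (paramRegion K)
  have hone (p : (Fin d → ℝ) × ℝ) : bracket (0 : Fin d → ℝ) ≤ bracket p.1 := by
    simp [bracket]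
  have hfirst := hb₁.weightedBounds_translate hr.1 (σ := fun _ => 0) (fun p _ => hone p) hK n
  have hsecond := (hb₂.weightedBounds_translate hr.1 (σ := fun p => p.2 • p.1)
    (fun p ht => bracket_smul_le ht p.1) hK n).clm_comp (Complex.conjCLE : ℂ →L[ℝ] ℂ)
  have hall := WeightedBounds.mul hw (hφ.weightedBounds_cexp_sub hr hK n)
    (WeightedBounds.mul hw hfirst hsecond)
  convert! hall.congr_weight hw fun z _ => ?_ using 1
  · funext p q
    have hzero : q + ((0 : Fin d → ℝ), (0 : Fin d → ℝ)) = q := add_zero q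
    have hexp (s t : ℝ) : Complex.exp (Complex.I * ((s - t : ℝ) : ℂ)) =
        Complex.exp (Complex.I * s) * Complex.exp (-(Complex.I * t)) := by
      rw [← Complex.exp_add, Complex.ofReal_sub, mul_sub, sub_eq_add_neg]
    simp only [crossAmplitude, map_mul, ← Complex.exp_conj, Complex.conj_I, Complex.conj_ofReal,
      hzero, ContinuousLinearEquiv.coe_coe, Complex.conjCLE_apply, hexp, neg_mul]
    ring
  · rw [Real.rpow_add (bracket_pos _), Real.rpow_add (bracket_pos _)]
    ring

end Oscillatory

/-! ### Differentiation under the integral sign -/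

section ParametricIntegral

variable {P H F : Type*} [MeasurableSpace P] {μ : Measure P} [NormedAddCommGroup H]
  [NormedSpace ℝ H] [NormedAddCommGroup F] [NormedSpace ℝ F] {f : P → H → F}

/-- A family of smooth functions on `H` which may be integrated over its parameter and
differentiated under the integral sign to all orders: on each compact set every iterated
derivative is dominated by an integrable function of the parameter. -/
structure SmoothlyDominated (μ : Measure P) (f : P → H → F) : Prop where
  smooth : ∀ p, ContDiff ℝ ∞ (f p)
  measurable : ∀ l q, AEStronglyMeasurable (fun p => dirDerivList l (f p) q) μ
  bound : ∀ (l : List H) (K : Set H), IsCompact K →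
    ∃ B : P → ℝ, Integrable B μ ∧ ∀ᵐ p ∂μ, ∀ q ∈ K, ‖dirDerivList l (f p) q‖ ≤ B p

namespace SmoothlyDominated

protected lemma dirDeriv (h : SmoothlyDominated μ f) (v : H) :
    SmoothlyDominated μ fun p => dirDeriv v (f p) := by
  have hcons (l : List H) (p : P) :
      dirDerivList l (dirDeriv v (f p)) = dirDerivList (v :: l) (f p) :=
    (dirDerivList_cons_eq_dirDerivList_dirDeriv (h.smooth p) v l).symm
  refine ⟨fun p => contDiff_dirDeriv (h.smooth p) v, fun l q => ?_, fun l K hK => ?_⟩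
  · simpa only [hcons] using h.measurable (v :: l) q
  · simpa only [hcons] using h.bound (v :: l) K hK

lemma integrable (h : SmoothlyDominated μ f) (q : H) : Integrable (fun p => f p q) μ := by
  obtain ⟨B, hB, hfB⟩ := h.bound [] {q} isCompact_singleton
  exact hB.mono' (h.measurable [] q) (hfB.mono fun p hp => hp q rfl)

lemma of_basis {ι : Type*} [Finite ι] (b : Module.Basis ι ℝ H) (hs : ∀ p, ContDiff ℝ ∞ (f p))
    (hm : ∀ l q, AEStronglyMeasurable (fun p => dirDerivList l (f p) q) μ)
    (hbound : ∀ (L : List ι) (K : Set H), IsCompact K → ∃ B : P → ℝ, Integrable B μ ∧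
      ∀ᵐ p ∂μ, ∀ q ∈ K, ‖dirDerivList (L.map b) (f p) q‖ ≤ B p) :
    SmoothlyDominated μ f := by
  cases nonempty_fintype ι
  refine ⟨hs, hm, fun l K hK => ?_⟩
  suffices hmixed : ∀ L : List ι, ∃ B : P → ℝ, Integrable B μ ∧
      ∀ᵐ p ∂μ, ∀ q ∈ K, ‖dirDerivList (l ++ L.map b) (f p) q‖ ≤ B p by
    simpa using hmixed []
  induction l with
  | nil => exact fun L => hbound L K hK
  | cons v l ih =>
    intro L
    choose B hB hfB using fun i => ih (i :: L)
    refine ⟨fun p => ∑ i, |b.repr v i| * B i p,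
      integrable_finsetSum _ fun i _ => (hB i).const_mul _, ?_⟩
    filter_upwards [ae_all_iff.2 hfB] with p hp q hq
    have hexpand : dirDerivList (v :: l ++ L.map b) (f p) q =
        ∑ i, b.repr v i • dirDerivList (l ++ (i :: L).map b) (f p) q := by
      have hperm (i : ι) : dirDerivList (l ++ (i :: L).map b) (f p) =
          dirDerivList (b i :: (l ++ L.map b)) (f p) :=
        dirDerivList_perm (hs p) List.perm_middle
      simp only [hperm, List.cons_append, dirDerivList, dirDeriv]
      conv_lhs => rw [← b.sum_repr v, map_sum]
      simp only [map_smul]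
    rw [hexpand]
    refine norm_sum_le_of_le _ fun i _ => ?_
    rw [norm_smul, Real.norm_eq_abs]
    exact mul_le_mul_of_nonneg_left (hp i q hq) (abs_nonneg _)

variable [FiniteDimensional ℝ H]

lemma aestronglyMeasurable_fderiv (h : SmoothlyDominated μ f) (q : H) :
    AEStronglyMeasurable (fun p => fderiv ℝ (f p) q) μ := by
  let b := Module.finBasis ℝ H
  have hsum (p : P) : fderiv ℝ (f p) q =
      ∑ i, (b.coord i).toContinuousLinearMap.smulRight (fderiv ℝ (f p) q (b i)) := by
    ext v
    conv_lhs => rw [← b.sum_repr v, map_sum]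
    simp
  rw [funext hsum]
  exact Finset.aestronglyMeasurable_fun_sum _ fun i _ =>
    (ContinuousLinearMap.smulRightL ℝ H F (b.coord i).toContinuousLinearMap).continuous
      |>.comp_aestronglyMeasurable (h.measurable [b i] q)

lemma exists_dominating_fderiv (h : SmoothlyDominated μ f) {K : Set H} (hK : IsCompact K) :
    ∃ B : P → ℝ, Integrable B μ ∧ ∀ᵐ p ∂μ, ∀ q ∈ K, ‖fderiv ℝ (f p) q‖ ≤ B p := by
  let b := Module.finBasis ℝ H
  obtain ⟨C, -, hC⟩ := b.exists_opNorm_le (F := F)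
  choose B hB hfB using fun i => h.bound [b i] K hK
  refine ⟨fun p => C * ∑ i, |B i p|, (integrable_finsetSum _ fun i _ => (hB i).abs).const_mul C, ?_⟩
  filter_upwards [ae_all_iff.2 hfB] with p hp q hq
  refine hC (Finset.sum_nonneg fun i _ => abs_nonneg _) fun i => ?_
  exact (hp i q hq).trans ((le_abs_self _).trans
    (Finset.single_le_sum (fun j _ => abs_nonneg (B j p)) (Finset.mem_univ i)))

lemma integrable_fderiv (h : SmoothlyDominated μ f) (q : H) :
    Integrable (fun p => fderiv ℝ (f p) q) μ := by
  obtain ⟨B, hB, hfB⟩ := h.exists_dominating_fderiv (isCompact_singleton (x := q))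
  exact hB.mono' (h.aestronglyMeasurable_fderiv q) (hfB.mono fun p hp => hp q rfl)

theorem hasFDerivAt_integral (h : SmoothlyDominated μ f) (q : H) :
    HasFDerivAt (fun q => ∫ p, f p q ∂μ) (∫ p, fderiv ℝ (f p) q ∂μ) q := by
  have : ProperSpace H := FiniteDimensional.proper ℝ H
  obtain ⟨B, hB, hfB⟩ := h.exists_dominating_fderiv (isCompact_closedBall q 1)
  exact hasFDerivAt_integral_of_dominated_of_fderiv_le (F' := fun q p => fderiv ℝ (f p) q)
    (Metric.closedBall_mem_nhds q one_pos) (Eventually.of_forall (h.measurable []))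
    (h.integrable q) (h.aestronglyMeasurable_fderiv q) hfB hB
    (Eventually.of_forall fun p q _ => (differentiable_of_smooth (h.smooth p) q).hasFDerivAt)

theorem dirDeriv_integral (h : SmoothlyDominated μ f) (v : H) :
    _root_.dirDeriv v (fun q => ∫ p, f p q ∂μ) = fun q => ∫ p, _root_.dirDeriv v (f p) q ∂μ := by
  funext q
  rw [_root_.dirDeriv, (h.hasFDerivAt_integral q).fderiv,
    ContinuousLinearMap.integral_apply (h.integrable_fderiv q)]
  rfl

theorem dirDerivList_integral (h : SmoothlyDominated μ f) (l : List H) :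
    dirDerivList l (fun q => ∫ p, f p q ∂μ) = fun q => ∫ p, dirDerivList l (f p) q ∂μ := by
  have hcons {l : List H} : SmoothlyDominated μ fun p => dirDerivList l (f p) := by
    induction l with
    | nil => exact h
    | cons v l ih => exact ih.dirDeriv v
  induction l with
  | nil => rfl
  | cons v l ih =>
    rw [dirDerivList, ih]
    exact hcons.dirDeriv_integral v

theorem contDiff_integral (h : SmoothlyDominated μ f) :
    ContDiff ℝ ∞ fun q => ∫ p, f p q ∂μ := by
  refine contDiff_infty.2 fun n => ?_
  induction n generalizing f with
  | zero =>
    exact contDiff_zero.2 (continuous_iff_continuousAt.2 fun q =>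
      (h.hasFDerivAt_integral q).continuousAt)
  | succ n ih =>
    rw [Nat.cast_succ, contDiff_succ_iff_fderiv]
    refine ⟨fun q => (h.hasFDerivAt_integral q).differentiableAt, by simp, ?_⟩
    refine contDiff_clm_apply_iff.2 fun v => ?_
    change ContDiff ℝ n (_root_.dirDeriv v fun q => ∫ p, f p q ∂μ)
    rw [h.dirDeriv_integral v]
    exact ih (h.dirDeriv v)

end SmoothlyDominated

variable {E : Type*} [NormedAddCommGroup E] [NormedSpace ℝ E] [MeasurableSpace E] [BorelSpace E]
  [SecondCountableTopology E] {ν : Measure E} {g : E × H → F}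

lemma aestronglyMeasurable_dirDerivList (hg : ContDiff ℝ ∞ g) (l : List H) (q : H) :
    AEStronglyMeasurable (fun y => dirDerivList l (fun q => g (y, q)) q) ν := by
  simp only [dirDerivList_slice_snd hg]
  exact ((contDiff_dirDerivList hg _).continuous.comp
    (continuous_id.prodMk continuous_const)).aestronglyMeasurable

lemma smoothlyDominated_restrict_of_isCompact [IsFiniteMeasureOnCompacts ν]
    (hg : ContDiff ℝ ∞ g) {K : Set E} (hK : IsCompact K) :
    SmoothlyDominated (ν.restrict K) fun y q => g (y, q) := by
  refine ⟨fun y => hg.comp (contDiff_const.prodMk contDiff_id),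
    aestronglyMeasurable_dirDerivList hg, fun l K' hK' => ?_⟩
  obtain ⟨C, hC⟩ := (hK.prod hK').exists_bound_of_continuousOn
    (contDiff_dirDerivList hg (l.map fun v => ((0 : E), v))).continuous.continuousOn
  refine ⟨fun _ => C, continuousOn_const.integrableOn_compact hK, ?_⟩
  filter_upwards [ae_restrict_mem hK.measurableSet] with y hy q hq
  rw [dirDerivList_slice_snd hg]
  exact hC (y, q) ⟨hy, hq⟩

end ParametricIntegral

/-! ### Fourier integrals -/

section FourierIntegral

variable {d : ℕ}

lemma dotp_eq_dotProduct (x ξ : Fin d → ℝ) : dotp x ξ = x ⬝ᵥ ξ := rfl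

/-- The plane wave `e^{i⟨x,ζ⟩}`. -/
noncomputable def planeWave (x ζ : Fin d → ℝ) : ℂ := Complex.exp (Complex.I * dotp x ζ)

lemma planeWave_comm (x ζ : Fin d → ℝ) : planeWave x ζ = planeWave ζ x := by
  simp only [planeWave, dotp_eq_dotProduct, dotProduct_comm]

lemma planeWave_neg_right (x ζ : Fin d → ℝ) :
    planeWave x (-ζ) = Complex.exp (-(Complex.I * dotp x ζ)) := by
  simp only [planeWave, dotp_eq_dotProduct, dotProduct_neg, Complex.ofReal_neg, mul_neg]

lemma planeWave_add_right (x ζ η : Fin d → ℝ) :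
    planeWave x (ζ + η) = planeWave x ζ * planeWave x η := by
  simp only [planeWave, dotp_eq_dotProduct, dotProduct_add, Complex.ofReal_add, mul_add,
    Complex.exp_add]

lemma planeWave_sub_left (x y ζ : Fin d → ℝ) :
    planeWave (x - y) ζ = planeWave x ζ * planeWave y (-ζ) := by
  simp only [planeWave, dotp_eq_dotProduct, sub_eq_add_neg, add_dotProduct, neg_dotProduct,
    dotProduct_neg, Complex.ofReal_add, mul_add, Complex.exp_add]

lemma norm_planeWave (x ζ : Fin d → ℝ) : ‖planeWave x ζ‖ = 1 :=
  Complex.norm_exp_I_mul_ofReal _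

lemma contDiff_dotp : ContDiff ℝ ∞ fun z : Phase d => dotp z.1 z.2 := by
  unfold dotp
  fun_prop

lemma contDiff_planeWave : ContDiff ℝ ∞ fun z : Phase d => planeWave z.1 z.2 :=
  contDiff_cexp_I_mul contDiff_dotp

lemma contDiff_planeWave_left (ζ : Fin d → ℝ) : ContDiff ℝ ∞ fun x => planeWave x ζ :=
  contDiff_planeWave.comp (contDiff_prodMk_left ζ)

lemma dirDeriv_dotp_left (v ζ : Fin d → ℝ) :
    dirDeriv v (fun x => dotp x ζ) = fun _ => dotp v ζ := by
  funext x
  exact congrArg (· v) ((dotProductBilin ℝ ℝ).flip ζ).toContinuousLinearMap.fderiv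

lemma dirDeriv_planeWave_left (v ζ : Fin d → ℝ) :
    dirDeriv v (fun x => planeWave x ζ) = fun x => Complex.I * dotp v ζ * planeWave x ζ := by
  have hsmooth : ContDiff ℝ ∞ fun x : Fin d → ℝ => dotp x ζ :=
    contDiff_dotp.comp (contDiff_prodMk_left ζ)
  simp only [planeWave, dirDeriv_cexp_I_mul (differentiable_of_smooth hsmooth),
    dirDeriv_dotp_left]

/-- The Fourier integral `∫ e^{-i⟨y,ζ⟩} f(y) dy`, without normalizing constant. -/
noncomputable def fourierInt (f : (Fin d → ℝ) → ℂ) (ζ : Fin d → ℝ) : ℂ :=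
  ∫ y, planeWave y (-ζ) * f y

variable {f : (Fin d → ℝ) → ℂ}

lemma integrable_planeWave_mul (hf : Integrable f) (ζ : Fin d → ℝ) :
    Integrable fun y => planeWave y ζ * f y :=
  hf.bdd_mul (contDiff_planeWave_left ζ).continuous.aestronglyMeasurable
    (Eventually.of_forall fun y => (norm_planeWave y ζ).le)

lemma norm_fourierInt_le (f : (Fin d → ℝ) → ℂ) (ζ : Fin d → ℝ) :
    ‖fourierInt f ζ‖ ≤ ∫ y, ‖f y‖ :=
  (norm_integral_le_integral_norm _).trans_eq <| by simp only [norm_mul, norm_planeWave, one_mul]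

lemma fourierInt_dirDeriv (hf : Differentiable ℝ f) (v : Fin d → ℝ) (hint : Integrable f)
    (hint' : Integrable (dirDeriv v f)) (ζ : Fin d → ℝ) :
    fourierInt (dirDeriv v f) ζ = Complex.I * dotp v ζ * fourierInt f ζ := by
  have hderiv (y) : fderiv ℝ (fun y => planeWave y (-ζ)) y v =
      -(Complex.I * dotp v ζ) * planeWave y (-ζ) := by
    refine (congrFun (dirDeriv_planeWave_left v (-ζ)) y).trans ?_
    simp only [dotp_eq_dotProduct, dotProduct_neg, Complex.ofReal_neg, mul_neg]
  have hparts := integral_mul_fderiv_eq_neg_fderiv_mul_of_integrable (v := v) (g := f)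
    (f := fun y => planeWave y (-ζ)) (μ := (volume : Measure (Fin d → ℝ)))
    (by simpa only [hderiv, mul_assoc] using (integrable_planeWave_mul hint (-ζ)).const_mul _)
    (integrable_planeWave_mul hint' (-ζ)) (integrable_planeWave_mul hint (-ζ))
    (fun y _ => differentiable_of_smooth (contDiff_planeWave_left (-ζ)) y) fun y _ => hf y
  refine hparts.trans ?_
  simp only [hderiv, mul_assoc, integral_const_mul, neg_mul, integral_neg, neg_neg, fourierInt]

lemma fourierInt_dirDerivList (hf : ContDiff ℝ ∞ f)
    (hint : ∀ l : List (Fin d → ℝ), Integrable (dirDerivList l f)) (l : List (Fin d → ℝ))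
    (ζ : Fin d → ℝ) :
    fourierInt (dirDerivList l f) ζ =
      (l.map fun v => Complex.I * (dotp v ζ : ℂ)).prod * fourierInt f ζ := by
  induction l with
  | nil => simp only [dirDerivList, List.map_nil, List.prod_nil, one_mul]
  | cons v l ih =>
    rw [dirDerivList, fourierInt_dirDeriv (differentiable_of_smooth (contDiff_dirDerivList hf l))
      v (hint l) (hint (v :: l)), ih, List.map_cons, List.prod_cons]
    ring

lemma norm_pow_mul_norm_fourierInt_le (hf : ContDiff ℝ ∞ f)
    (hint : ∀ l : List (Fin d → ℝ), Integrable (dirDerivList l f)) (j : Fin d) (N : ℕ)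
    (ζ : Fin d → ℝ) :
    |ζ j| ^ N * ‖fourierInt f ζ‖ ≤
      ∫ y, ‖dirDerivList (List.replicate N (Pi.single j 1)) f y‖ := by
  refine le_of_eq_of_le ?_
    (norm_fourierInt_le (dirDerivList (List.replicate N (Pi.single j 1)) f) ζ)
  simp only [fourierInt_dirDerivList hf hint, List.map_replicate, List.prod_replicate,
    dotp_eq_dotProduct, single_one_dotProduct, norm_mul, norm_pow, Complex.norm_I, one_mul,
    Complex.norm_real, Real.norm_eq_abs]

lemma bracket_pow_mul_norm_fourierInt_le (hf : ContDiff ℝ ∞ f)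
    (hint : ∀ l : List (Fin d → ℝ), Integrable (dirDerivList l f)) (N : ℕ) {B : ℝ}
    (hB : ∫ y, ‖f y‖ ≤ B)
    (hB' : ∀ j, ∫ y, ‖dirDerivList (List.replicate N (Pi.single j 1)) f y‖ ≤ B)
    (ζ : Fin d → ℝ) :
    bracket ζ ^ N * ‖fourierInt f ζ‖ ≤ 2 ^ N * B := by
  rcases le_total ‖ζ‖ 1 with hζ | hζ
  · have hbracket : bracket ζ ≤ 2 := by unfold bracket; linarith
    exact mul_le_mul (pow_le_pow_left₀ (bracket_pos ζ).le hbracket N)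
      ((norm_fourierInt_le f ζ).trans hB) (norm_nonneg _) (by positivity)
  · have : Nonempty (Fin d) := by
      by_contra hempty
      rw [not_nonempty_iff] at hempty
      norm_num [Subsingleton.elim ζ 0] at hζ
    obtain ⟨j, hj : |ζ j| = ‖ζ‖⟩ := (IsGreatest.pi_norm ζ).1
    have hbracket : bracket ζ ≤ 2 * |ζ j| := by unfold bracket; linarith
    calc bracket ζ ^ N * ‖fourierInt f ζ‖ ≤ (2 * |ζ j|) ^ N * ‖fourierInt f ζ‖ := by
          have := (bracket_pos ζ).le
          gcongr
      _ = 2 ^ N * (|ζ j| ^ N * ‖fourierInt f ζ‖) := by ring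
      _ ≤ 2 ^ N * B := by
          gcongr
          exact (norm_pow_mul_norm_fourierInt_le hf hint j N ζ).trans (hB' j)

end FourierIntegral

section FourierInversion

variable {d : ℕ}

open scoped FourierTransform

lemma planeWave_smul_ofLp (x ζ : EuclideanSpace ℝ (Fin d)) (t : ℝ) :
    planeWave (WithLp.ofLp x) (t • WithLp.ofLp ζ) =
      Complex.exp (↑(t * inner ℝ x ζ) * Complex.I) := by
  simp only [planeWave, dotp_eq_dotProduct, smul_dotProduct, smul_eq_mul,
    EuclideanSpace.inner_eq_star_dotProduct, star_trivial, mul_comm Complex.I,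
    dotProduct_comm (WithLp.ofLp x)]

lemma integral_comp_ofLp (g : (Fin d → ℝ) → ℂ) :
    ∫ v : EuclideanSpace ℝ (Fin d), g (WithLp.ofLp v) = ∫ y, g y :=
  (PiLp.volume_preserving_ofLp (Fin d)).integral_comp
    (MeasurableEquiv.toLp 2 (Fin d → ℝ)).symm.measurableEmbedding g

lemma integrable_comp_ofLp {g : (Fin d → ℝ) → ℂ} (hg : Integrable g) :
    Integrable fun v : EuclideanSpace ℝ (Fin d) => g (WithLp.ofLp v) :=
  (PiLp.volume_preserving_ofLp (Fin d)).integrable_comp_of_integrable hg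

lemma fourier_comp_ofLp (f : (Fin d → ℝ) → ℂ) (w : EuclideanSpace ℝ (Fin d)) :
    𝓕 (fun v : EuclideanSpace ℝ (Fin d) => f (WithLp.ofLp v)) w =
      fourierInt f ((2 * Real.pi) • WithLp.ofLp w) := by
  rw [Real.fourier_eq', fourierInt, ← integral_comp_ofLp]
  refine integral_congr_ae (Eventually.of_forall fun v => ?_)
  simp only [smul_eq_mul, ← neg_smul, planeWave_smul_ofLp, neg_mul]

lemma integral_planeWave_mul_fourierInt {f : (Fin d → ℝ) → ℂ} (hcont : Continuous f)
    (hint : Integrable f) (hint' : Integrable (fourierInt f)) (x : Fin d → ℝ) :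
    (((2 * Real.pi) ^ (-(d : ℝ)) : ℝ) : ℂ) * ∫ ζ, planeWave x ζ * fourierInt f ζ = f x := by
  have hpi : (0 : ℝ) < 2 * Real.pi := by positivity
  have hint_fourier :
      Integrable (𝓕 fun v : EuclideanSpace ℝ (Fin d) => f (WithLp.ofLp v)) := by
    refine (integrable_comp_ofLp (hint'.comp_smul hpi.ne')).congr ?_
    exact Eventually.of_forall fun w => (fourier_comp_ofLp f w).symm
  have hinv := congrFun ((hcont.comp (PiLp.continuous_ofLp 2 _)).fourierInv_fourier_eq
    (integrable_comp_ofLp hint) hint_fourier) (WithLp.toLp 2 x)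
  rw [Real.fourierInv_eq'] at hinv
  have hscale := Measure.integral_comp_smul (volume : Measure (Fin d → ℝ))
    (fun ζ => planeWave x ζ * fourierInt f ζ) (2 * Real.pi)
  rw [Module.finrank_fin_fun, abs_of_pos (by positivity), Complex.real_smul] at hscale
  rw [Real.rpow_neg hpi.le, Real.rpow_natCast, ← hscale, ← integral_comp_ofLp]
  refine Eq.trans (integral_congr_ae (Eventually.of_forall fun w => ?_)) hinv
  refine congrArg₂ (· * ·) ?_ (fourier_comp_ofLp f w).symm
  simpa only [real_inner_comm] using planeWave_smul_ofLp (WithLp.toLp 2 x) w (2 * Real.pi)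

end FourierInversion

section Schwartz

variable {d : ℕ}

open scoped FourierTransform

lemma exists_schwartzMap_eq_fourierInt (u : SchwartzMap (Fin d → ℝ) ℂ) :
    ∃ v : SchwartzMap (Fin d → ℝ) ℂ, ∀ ζ, v ζ = fourierInt u ζ := by
  have hpi : 2 * Real.pi ≠ 0 := by positivity
  let e := PiLp.continuousLinearEquiv 2 ℝ fun _ : Fin d => ℝ
  let w : SchwartzMap (EuclideanSpace ℝ (Fin d)) ℂ :=
    𝓕 (SchwartzMap.compCLMOfContinuousLinearEquiv ℝ e u)
  let scaling := ContinuousLinearEquiv.smulLeft (M₁ := Fin d → ℝ) (R₁ := ℝ) (Units.mk0 _ hpi)⁻¹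
  refine ⟨SchwartzMap.compCLMOfContinuousLinearEquiv ℝ (scaling.trans e.symm) w, fun ζ => ?_⟩
  have hw (η : EuclideanSpace ℝ (Fin d)) : w η = fourierInt u ((2 * Real.pi) • WithLp.ofLp η) := by
    rw [← fourier_comp_ofLp, SchwartzMap.fourier_coe]
    rfl
  refine (hw _).trans (congrArg _ ?_)
  exact smul_inv_smul₀ hpi ζ

lemma integrable_bracket_rpow_neg :
    Integrable fun ζ : Fin d → ℝ => bracket ζ ^ (-((d : ℝ) + 1)) :=
  integrable_one_add_norm (by simp)

lemma integrable_bracket_rpow_mul_norm (v : SchwartzMap (Fin d → ℝ) ℂ) (s : ℝ) :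
    Integrable fun ξ => bracket ξ ^ s * ‖v ξ‖ := by
  obtain ⟨n, hn⟩ := exists_nat_ge (s + (d + 1))
  obtain ⟨C, hC⟩ : ∃ C, ∀ ξ, bracket ξ ^ n * ‖v ξ‖ ≤ C :=
    ⟨_, fun ξ => by simpa [bracket] using
      SchwartzMap.one_add_le_sup_seminorm_apply (𝕜 := ℝ) (m := (n, 0)) le_rfl le_rfl v ξ⟩
  refine (integrable_bracket_rpow_neg.mul_const C).mono'
    ((continuous_bracket_rpow s).mul v.continuous.norm).aestronglyMeasurable
    (Eventually.of_forall fun ξ => ?_)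
  rw [Real.norm_of_nonneg (mul_nonneg (bracket_rpow_nonneg ξ s) (norm_nonneg _))]
  calc bracket ξ ^ s * ‖v ξ‖ ≤ bracket ξ ^ (-((d : ℝ) + 1)) * bracket ξ ^ n * ‖v ξ‖ := by
        rw [← Real.rpow_natCast, ← Real.rpow_add (bracket_pos ξ)]
        gcongr
        · exact one_le_bracket ξ
        · linarith
    _ ≤ bracket ξ ^ (-((d : ℝ) + 1)) * C := by
        rw [mul_assoc]
        exact mul_le_mul_of_nonneg_left (hC ξ) (bracket_rpow_nonneg ξ _)

lemma integrable_fourierInt_of_hasCompactSupport {f : (Fin d → ℝ) → ℂ} (hf : ContDiff ℝ ∞ f)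
    (hsupp : HasCompactSupport f) : Integrable (fourierInt f) := by
  obtain ⟨v, hv⟩ := exists_schwartzMap_eq_fourierInt (hsupp.toSchwartzMap hf)
  exact v.integrable.congr (Eventually.of_forall hv)

end Schwartz

/-! ### Fourier integrals in the base variable -/

section PartialFourier

variable {d : ℕ} {f : Phase d → ℂ} {K : Set (Fin d → ℝ)}

/-- The Fourier integral of `f` in its base variable, evaluated at the frequency `ζ`. -/
noncomputable def partialFourier (f : Phase d → ℂ) (ζ ξ : Fin d → ℝ) : ℂ :=
  fourierInt (fun y => f (y, ξ)) ζ

lemma partialFourier_eq_setIntegral (hf : ∀ q : Phase d, q.1 ∉ K → f q = 0) (ζ ξ : Fin d → ℝ) :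
    partialFourier f ζ ξ = ∫ y in K, planeWave y (-ζ) * f (y, ξ) := by
  refine (setIntegral_eq_integral_of_forall_compl_eq_zero fun y hy => ?_).symm
  simp only [hf (y, ξ) hy, mul_zero]

lemma contDiff_partialFourier {P : Type*} [NormedAddCommGroup P] [NormedSpace ℝ P]
    [FiniteDimensional ℝ P] {g : P → Phase d → ℂ}
    (hg : ContDiff ℝ ∞ fun z : P × Phase d => g z.1 z.2)
    (hK : IsCompact K) (hgK : ∀ p q, q.1 ∉ K → g p q = 0) :
    ContDiff ℝ ∞ fun w : P × Phase d => partialFourier (g w.1) w.2.1 w.2.2 := by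
  simp only [fun w : P × Phase d => partialFourier_eq_setIntegral (hgK w.1) w.2.1 w.2.2]
  refine (smoothlyDominated_restrict_of_isCompact (g := fun z : (Fin d → ℝ) × (P × Phase d) =>
    planeWave z.1 (-z.2.2.1) * g z.2.1 (z.1, z.2.2.2)) (ContDiff.mul ?_ ?_) hK).contDiff_integral
  · exact contDiff_planeWave.comp (f := fun z : (Fin d → ℝ) × (P × Phase d) => (z.1, -z.2.2.1))
      (by fun_prop)
  · exact hg.comp (f := fun z : (Fin d → ℝ) × (P × Phase d) => (z.2.1, (z.1, z.2.2.2)))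
      (by fun_prop)

lemma dirDerivList_eq_zero_of_notMem (hK : IsClosed K) (hf : ∀ q : Phase d, q.1 ∉ K → f q = 0)
    (l : List (Phase d)) (q : Phase d) (hq : q.1 ∉ K) : dirDerivList l f q = 0 :=
  dirDerivList_eq_zero_of_eqOn_open (hK.isOpen_compl.preimage continuous_fst)
    (fun q hq => hf q hq) l q hq

lemma dirDerivList_partialFourier (hf : ContDiff ℝ ∞ f) (hK : IsCompact K)
    (hfK : ∀ q : Phase d, q.1 ∉ K → f q = 0) (ζ : Fin d → ℝ) (l : List (Fin d → ℝ)) :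
    dirDerivList l (partialFourier f ζ) =
      partialFourier (dirDerivList (l.map fun v => (0, v)) f) ζ := by
  have hsmooth : ContDiff ℝ ∞ fun z : Phase d => planeWave z.1 (-ζ) * f z :=
    ((contDiff_planeWave_left (-ζ)).comp contDiff_fst).mul hf
  rw [funext (partialFourier_eq_setIntegral hfK ζ),
    (smoothlyDominated_restrict_of_isCompact hsmooth hK).dirDerivList_integral]
  funext ξ
  rw [partialFourier_eq_setIntegral (dirDerivList_eq_zero_of_notMem hK.isClosed hfK _)]
  refine integral_congr_ae (Eventually.of_forall fun y => ?_)
  have hslice : ContDiff ℝ ∞ fun ξ => f (y, ξ) := hf.comp (contDiff_prodMk_right y)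
  refine (congrFun (dirDerivList_clm_comp hslice
    (ContinuousLinearMap.mul ℝ ℂ (planeWave y (-ζ))) l) ξ).trans ?_
  rw [dirDerivList_slice_snd hf]
  rfl

lemma integral_norm_le_mul_volume {F : Type*} [NormedAddCommGroup F] {u : (Fin d → ℝ) → F}
    (hK : IsCompact K) (hu : ∀ y ∉ K, u y = 0) {B : ℝ} (hB : ∀ y ∈ K, ‖u y‖ ≤ B) :
    ∫ y, ‖u y‖ ≤ B * volume.real K := by
  rw [← setIntegral_eq_integral_of_forall_compl_eq_zero
    fun y hy => by rw [hu y hy, norm_zero]]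
  refine (le_abs_self _).trans (norm_setIntegral_le_of_norm_le_const (f := fun y => ‖u y‖)
    hK.measure_lt_top fun y hy => ?_)
  simpa only [norm_norm] using hB y hy

lemma bracket_pow_mul_norm_partialFourier_le (hf : ContDiff ℝ ∞ f) (hK : IsCompact K)
    (hfK : ∀ q : Phase d, q.1 ∉ K → f q = 0) (N : ℕ) {B : ℝ} {ξ : Fin d → ℝ}
    (hB : ∀ y ∈ K, ‖f (y, ξ)‖ ≤ B)
    (hB' : ∀ j, ∀ y ∈ K, ‖phaseDeriv (List.replicate N (Sum.inl j)) f (y, ξ)‖ ≤ B)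
    (ζ : Fin d → ℝ) :
    bracket ζ ^ N * ‖partialFourier f ζ ξ‖ ≤ 2 ^ N * (B * volume.real K) := by
  have hslice : ContDiff ℝ ∞ fun y => f (y, ξ) := hf.comp (contDiff_prodMk_left ξ)
  have hderiv (l : List (Fin d → ℝ)) : ∀ y ∉ K, dirDerivList l (fun y => f (y, ξ)) y = 0 :=
    dirDerivList_eq_zero_of_eqOn_open hK.isClosed.isOpen_compl (fun y hy => hfK (y, ξ) hy) l
  refine bracket_pow_mul_norm_fourierInt_le hslice (fun l =>
      (contDiff_dirDerivList hslice l).continuous.integrable_of_hasCompactSupport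
        (HasCompactSupport.intro hK (hderiv l))) N
    (integral_norm_le_mul_volume hK (hderiv []) hB) (fun j => ?_) ζ
  refine integral_norm_le_mul_volume hK (hderiv _) fun y hy => ?_
  refine le_of_eq_of_le (congrArg norm ?_) (hB' j y hy)
  have hslices := phaseDeriv_map_inl hf (List.replicate N j) y ξ
  simpa only [List.map_replicate, Pi.basisFun_apply] using hslices.symm

lemma norm_phaseDeriv_comp_snd_le {u : (Fin d → ℝ) → ℂ} (hu : ContDiff ℝ ∞ u)
    (l l' : List (Fin d)) (q : Phase d) :
    ‖phaseDeriv (l'.map Sum.inl ++ l.map Sum.inr) (fun q : Phase d => u q.2) q‖ ≤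
      ‖dirDerivList (l.map (Pi.basisFun ℝ (Fin d))) u q.2‖ := by
  have hcomp : ContDiff ℝ ∞ fun q : Phase d => u q.2 := hu.comp contDiff_snd
  have hfibre : phaseDeriv (l.map Sum.inr) (fun q : Phase d => u q.2) =
      fun q => dirDerivList (l.map (Pi.basisFun ℝ (Fin d))) u q.2 :=
    funext fun q => phaseDeriv_map_inr hcomp l q.1 q.2
  rw [phaseDeriv_append, hfibre]
  rcases eq_or_ne l' [] with rfl | hl'
  · exact le_rfl
  · refine le_of_eq_of_le ?_ (norm_nonneg _)
    rw [norm_eq_zero]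
    refine (phaseDeriv_map_inl ((contDiff_dirDerivList hu _).comp contDiff_snd) l' q.1 q.2).trans ?_
    have hne : l'.map (Pi.basisFun ℝ (Fin d)) ≠ [] := mt List.map_eq_nil_iff.1 hl'
    exact congrFun (dirDerivList_const_of_ne_nil
      (dirDerivList (l.map (Pi.basisFun ℝ (Fin d))) u q.2) hne) q.1

end PartialFourier

section AmplitudeFamily

variable {d : ℕ}

/-- The families of amplitudes `g_{ζ,t}(y, ξ)` whose Fourier integrals in `y` decay rapidly:
supported in `y ∈ K`, and obeying symbol estimates of order `m` in `ξ` with a loss of `⟨ζ⟩^s`, of a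
further `⟨ζ⟩^r` per base derivative and `⟨ζ⟩²` per fibre derivative. -/
structure IsAmplitudeFamily (K : Set (Fin d → ℝ)) (r m s : ℝ)
    (g : (Fin d → ℝ) × ℝ → Phase d → ℂ) : Prop where
  smooth : ContDiff ℝ ∞ fun z : ((Fin d → ℝ) × ℝ) × Phase d => g z.1 z.2
  eq_zero : ∀ p q, q.1 ∉ K → g p q = 0
  bounds : ∀ n, WeightedBounds (phaseBasis d) (paramRegion K) (crossWeight r) n
    (fun z => bracket z.2.2 ^ m * bracket z.1.1 ^ s) g

/-- The families of symbols `G_{ζ,t}` of order `m` decaying faster than any power of `ζ`, uniformly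
in `t ∈ [0, 1]`. -/
structure IsRapidSymbolFamily (m : ℝ) (G : (Fin d → ℝ) × ℝ → Phase d → ℂ) : Prop where
  smooth : ContDiff ℝ ∞ fun z : ((Fin d → ℝ) × ℝ) × Phase d => G z.1 z.2
  bounds : ∀ (M : ℝ) n, WeightedBounds (phaseBasis d) (paramRegion Set.univ) (crossWeight 1) n
    (fun z => bracket z.2.2 ^ m * bracket z.1.1 ^ (-M)) G

variable {K : Set (Fin d → ℝ)} {r m s : ℝ} {g : (Fin d → ℝ) × ℝ → Phase d → ℂ}

lemma prod_crossWeight_append_map (r : ℝ) (l l' : List (Fin d))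
    (z : ((Fin d → ℝ) × ℝ) × Phase d) :
    ((l'.map Sum.inl ++ l.map Sum.inr).map fun i => crossWeight r i z).prod =
      (bracket z.1.1 ^ r) ^ l'.length * (bracket z.1.1 ^ 2 * (bracket z.2.2)⁻¹) ^ l.length := by
  simp [crossWeight, splitWeight, Function.comp_def]

lemma IsAmplitudeFamily.exists_norm_phaseDeriv_le (hg : IsAmplitudeFamily K r m s g) (hr : 0 ≤ r)
    {N : ℕ} {S : Finset (List (Fin d))} (hS : ∀ l' ∈ S, l'.length ≤ N) (l : List (Fin d)) :
    ∃ C, 0 ≤ C ∧ ∀ l' ∈ S, ∀ z ∈ paramRegion K,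
      ‖phaseDeriv (l'.map Sum.inl ++ l.map Sum.inr) (g z.1) z.2‖ ≤
        C * (bracket z.2.2 ^ m * bracket z.1.1 ^ s *
          ((bracket z.1.1 ^ r) ^ N * (bracket z.1.1 ^ 2 * (bracket z.2.2)⁻¹) ^ l.length)) := by
  choose C hC hgC using fun l' : List (Fin d) =>
    (hg.bounds _).bound (l'.map Sum.inl ++ l.map Sum.inr) le_rfl
  have hsum : 0 ≤ ∑ l' ∈ S, C l' := Finset.sum_nonneg fun l' _ => hC l'
  refine ⟨∑ l' ∈ S, C l', hsum, fun l' hl' z hz => ?_⟩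
  have hζ := (bracket_pos z.1.1).le
  have hξ := bracket_inv_nonneg z.2.2
  have hW : 0 ≤ bracket z.2.2 ^ m * bracket z.1.1 ^ s :=
    mul_nonneg (bracket_rpow_nonneg _ m) (bracket_rpow_nonneg _ s)
  refine (hgC l' z hz).trans ?_
  have := bracket_rpow_nonneg z.1.1 r
  rw [prod_crossWeight_append_map]
  gcongr
  · exact Finset.single_le_sum (fun l' _ => hC l') hl'
  · exact Real.one_le_rpow (one_le_bracket _) hr
  · exact hS l' hl'

theorem IsAmplitudeFamily.exists_norm_partialFourier_le (hg : IsAmplitudeFamily K r m s g)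
    (hr : r ∈ Set.Ico (0 : ℝ) 1) (hK : IsCompact K) (M : ℝ) (l : List (Fin d)) :
    ∃ C, 0 ≤ C ∧ ∀ p : (Fin d → ℝ) × ℝ, p.2 ∈ Set.Icc (0 : ℝ) 1 → ∀ ξ,
      ‖partialFourier (phaseDeriv (l.map Sum.inr) (g p)) p.1 ξ‖ ≤
        C * (bracket ξ ^ m * bracket p.1 ^ (-M) *
          (bracket p.1 ^ 2 * (bracket ξ)⁻¹) ^ l.length) := by
  obtain ⟨N, hN⟩ := exists_nat_ge ((M + s) / (1 - r))
  rw [div_le_iff₀ (sub_pos.2 hr.2)] at hN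
  obtain ⟨C, hC, hgC⟩ := hg.exists_norm_phaseDeriv_le hr.1 (N := N)
    (S := insert [] (Finset.univ.image (List.replicate N))) (by simp) l
  refine ⟨2 ^ N * (C * volume.real K), by positivity, fun ⟨ζ, t⟩ ht ξ => ?_⟩
  have hζ := bracket_pos ζ
  have hmain := bracket_pow_mul_norm_partialFourier_le
    (f := phaseDeriv (l.map Sum.inr) (g (ζ, t))) (ξ := ξ) (B := C * (bracket ξ ^ m * bracket ζ ^ s *
      ((bracket ζ ^ r) ^ N * (bracket ζ ^ 2 * (bracket ξ)⁻¹) ^ l.length)))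
    (contDiff_dirDerivList ((hg.bounds 0).smooth (ζ, t)) _) hK
    (dirDerivList_eq_zero_of_notMem hK.isClosed (hg.eq_zero (ζ, t)) _) N
    (fun y hy => hgC [] (Finset.mem_insert_self _ _) ((ζ, t), y, ξ) ⟨ht, hy⟩)
    (fun j y hy => by
      have hj := hgC (List.replicate N j) (by simp) ((ζ, t), y, ξ) ⟨ht, hy⟩
      rwa [phaseDeriv_append, List.map_replicate] at hj) ζ
  have hgain : bracket ζ ^ s * (bracket ζ ^ r) ^ N ≤ bracket ζ ^ N * bracket ζ ^ (-M) := by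
    rw [← Real.rpow_natCast (bracket ζ ^ r), ← Real.rpow_mul hζ.le, ← Real.rpow_natCast (bracket ζ),
      ← Real.rpow_add hζ, ← Real.rpow_add hζ]
    exact Real.rpow_le_rpow_of_exponent_le (one_le_bracket _) (by linarith)
  set Q := (bracket ζ ^ 2 * (bracket ξ)⁻¹) ^ l.length
  have hQ : 0 ≤ Q := pow_nonneg (mul_nonneg (pow_nonneg hζ.le 2) (bracket_inv_nonneg ξ)) _
  have hcoeff : 0 ≤ 2 ^ N * (C * volume.real K) * (bracket ξ ^ m * Q) :=
    mul_nonneg (by positivity) (mul_nonneg (bracket_rpow_nonneg ξ m) hQ)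
  refine le_of_mul_le_mul_left (hmain.trans ?_) (pow_pos hζ N)
  calc 2 ^ N * (C * (bracket ξ ^ m * bracket ζ ^ s * ((bracket ζ ^ r) ^ N * Q)) * volume.real K)
      = 2 ^ N * (C * volume.real K) * (bracket ξ ^ m * Q) *
          (bracket ζ ^ s * (bracket ζ ^ r) ^ N) := by ring
    _ ≤ 2 ^ N * (C * volume.real K) * (bracket ξ ^ m * Q) * (bracket ζ ^ N * bracket ζ ^ (-M)) :=
        mul_le_mul_of_nonneg_left hgain hcoeff
    _ = _ := by ring

theorem IsAmplitudeFamily.weightedBounds_partialFourier (hg : IsAmplitudeFamily K r m s g)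
    (hr : r ∈ Set.Ico (0 : ℝ) 1) (hK : IsCompact K) (M : ℝ) (n : ℕ) :
    WeightedBounds (phaseBasis d) (paramRegion Set.univ) (crossWeight 1) n
      (fun z => bracket z.2.2 ^ m * bracket z.1.1 ^ (-M))
      fun p q => partialFourier (g p) p.1 q.2 := by
  have hsmooth (p : (Fin d → ℝ) × ℝ) : ContDiff ℝ ∞ (partialFourier (g p) p.1) :=
    (contDiff_partialFourier hg.smooth hK hg.eq_zero).comp (f := fun ξ => (p, p.1, ξ))
      (by fun_prop)
  have hcomp (p : (Fin d → ℝ) × ℝ) : ContDiff ℝ ∞ fun q : Phase d => partialFourier (g p) p.1 q.2 :=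
    (hsmooth p).comp contDiff_snd
  refine ⟨hcomp, fun L _ => ?_⟩
  obtain ⟨l, l', hL⟩ := exists_perm_append_map L
  obtain ⟨C, hC, hgC⟩ := hg.exists_norm_partialFourier_le hr hK M l
  refine ⟨C, hC, fun ⟨⟨ζ, t⟩, y, ξ⟩ hz => ?_⟩
  have hfibre : (l.map (Pi.basisFun ℝ (Fin d))).map (fun v => ((0 : Fin d → ℝ), v)) =
      (l.map Sum.inr).map (phaseBasis d) := by
    simp only [List.map_map, Function.comp_def, phaseBasis_inr]
  rw [← phaseDeriv, phaseDeriv_perm (hcomp _) hL, (hL.map _).prod_eq, prod_crossWeight_append_map]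
  refine (norm_phaseDeriv_comp_snd_le (hsmooth (ζ, t)) l l' (y, ξ)).trans ?_
  rw [dirDerivList_partialFourier ((hg.bounds 0).smooth (ζ, t)) hK (hg.eq_zero (ζ, t)), hfibre]
  refine (hgC (ζ, t) hz.1 ξ).trans (mul_le_mul_of_nonneg_left
    (mul_le_mul_of_nonneg_left ?_ ?_) hC)
  · refine le_mul_of_one_le_left (pow_nonneg (mul_nonneg (pow_nonneg (bracket_pos _).le 2)
      (bracket_inv_nonneg ξ)) _) (one_le_pow₀ ?_)
    exact Real.one_le_rpow (one_le_bracket ζ) zero_le_one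
  · exact mul_nonneg (bracket_rpow_nonneg ξ m) (bracket_rpow_nonneg ζ _)

lemma weightedBounds_planeWave (n : ℕ) :
    WeightedBounds (phaseBasis d) (paramRegion Set.univ) (crossWeight 1) n (fun _ => 1)
      fun p q => planeWave q.1 p.1 := by
  have hphase (p : (Fin d → ℝ) × ℝ) : ContDiff ℝ ∞ fun q : Phase d => dotp q.1 p.1 :=
    contDiff_dotp.comp (f := fun q : Phase d => (q.1, p.1)) (by fun_prop)
  have hderiv (v : Phase d) (p : (Fin d → ℝ) × ℝ) :
      dirDeriv v (fun q : Phase d => dotp q.1 p.1) = fun _ => dotp v.1 p.1 := by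
    funext q
    exact congrArg (· v) (((dotProductBilin ℝ ℝ).flip p.1).comp
      (LinearMap.fst ℝ _ _)).toContinuousLinearMap.fderiv
  refine WeightedBounds.cexp_I_mul (crossWeight_nonneg 1 _) hphase (fun i n => ?_) n
  simp only [hderiv]
  refine .const (crossWeight_nonneg 1 _) fun z hz => ?_
  cases i with
  | inl i =>
    simp only [phaseBasis_inl, dotp_eq_dotProduct, Pi.basisFun_apply, single_dotProduct, one_mul]
    exact ((norm_le_pi_norm z.1.1 i).trans (norm_le_bracket _)).trans_eq (Real.rpow_one _).symm
  | inr i =>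
    simpa only [phaseBasis_inr, dotp_eq_dotProduct, zero_dotProduct, norm_zero]
      using crossWeight_nonneg 1 _ (Sum.inr i) z hz

theorem IsAmplitudeFamily.isRapidSymbolFamily (hg : IsAmplitudeFamily K r m s g)
    (hr : r ∈ Set.Ico (0 : ℝ) 1) (hK : IsCompact K) {κ : (Fin d → ℝ) × ℝ → ℂ}
    (hκ : ContDiff ℝ ∞ κ) {k : ℕ}
    (hκk : ∀ p : (Fin d → ℝ) × ℝ, p.2 ∈ Set.Icc (0 : ℝ) 1 → ‖κ p‖ ≤ bracket p.1 ^ k) :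
    IsRapidSymbolFamily m fun p q => κ p * (planeWave q.1 p.1 * partialFourier (g p) p.1 q.2) := by
  refine ⟨?_, fun M n => ?_⟩
  · refine (hκ.comp contDiff_fst).mul (ContDiff.mul ?_ ?_)
    · exact contDiff_planeWave.comp
        (f := fun z : ((Fin d → ℝ) × ℝ) × Phase d => (z.2.1, z.1.1)) (by fun_prop)
    · exact (contDiff_partialFourier hg.smooth hK hg.eq_zero).comp
        (f := fun z : ((Fin d → ℝ) × ℝ) × Phase d => (z.1, z.1.1, z.2.2)) (by fun_prop)
  · have hw := crossWeight_nonneg (d := d) 1 (paramRegion Set.univ)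
    have hprod := WeightedBounds.mul hw (n := n)
      (.const hw (W := fun z => bracket z.1.1 ^ k) (c := κ) fun z hz => hκk z.1 hz.1)
      ((weightedBounds_planeWave n).mul hw (hg.weightedBounds_partialFourier hr hK (M + k) n))
    refine hprod.congr_weight hw fun z _ => ?_
    rw [one_mul, mul_left_comm, ← Real.rpow_natCast, ← Real.rpow_add (bracket_pos _)]
    congr 2
    ring

end AmplitudeFamily

section RapidSymbolFamily

variable {d : ℕ} {m : ℝ} {G : (Fin d → ℝ) × ℝ → Phase d → ℂ}

/-- The measure `dζ dt` on `ℝ^d × [0, 1]`. -/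
noncomputable def taylorMeasure (d : ℕ) : Measure ((Fin d → ℝ) × ℝ) :=
  (volume : Measure (Fin d → ℝ)).prod (volume.restrict (Set.Icc 0 1))

lemma ae_taylorMeasure_mem : ∀ᵐ p ∂taylorMeasure d, p.2 ∈ Set.Icc (0 : ℝ) 1 :=
  Measure.quasiMeasurePreserving_snd.ae (ae_restrict_mem measurableSet_Icc)

lemma integrable_bracket_taylorMeasure :
    Integrable (fun p => bracket p.1 ^ (-((d : ℝ) + 1))) (taylorMeasure d) := by
  simpa [taylorMeasure] using integrable_bracket_rpow_neg.mul_prod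
    (integrable_const (1 : ℝ) (μ := volume.restrict (Set.Icc (0 : ℝ) 1)))

namespace IsRapidSymbolFamily

lemma exists_norm_phaseDeriv_le (hG : IsRapidSymbolFamily m G) (L : List (Fin d ⊕ Fin d)) :
    ∃ C, 0 ≤ C ∧ ∀ p : (Fin d → ℝ) × ℝ, p.2 ∈ Set.Icc (0 : ℝ) 1 → ∀ q : Phase d,
      ‖phaseDeriv L (G p) q‖ ≤
        C * (bracket q.2 ^ m * (bracket q.2)⁻¹ ^ fibreCount L) *
          bracket p.1 ^ (-((d : ℝ) + 1)) := by
  obtain ⟨C, hC, hGC⟩ :=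
    (hG.bounds (baseCount L + 2 * fibreCount L + (d + 1)) _).bound L le_rfl
  refine ⟨C, hC, fun p hp q => (hGC (p, q) ⟨hp, trivial⟩).trans_eq ?_⟩
  have hζ := bracket_pos p.1
  have hpow : bracket p.1 ^ (-((baseCount L : ℝ) + 2 * fibreCount L + (d + 1))) *
      bracket p.1 ^ baseCount L * (bracket p.1 ^ 2) ^ fibreCount L =
        bracket p.1 ^ (-((d : ℝ) + 1)) := by
    rw [← pow_mul, ← Real.rpow_natCast, ← Real.rpow_natCast, ← Real.rpow_add hζ, ← Real.rpow_add hζ]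
    congr 1
    push_cast
    ring
  rw [crossWeight, prod_splitWeight, Real.rpow_one, mul_pow, ← hpow]
  ring

theorem smoothlyDominated (hG : IsRapidSymbolFamily m G) :
    SmoothlyDominated (taylorMeasure d) G := by
  refine .of_basis (phaseBasis d) (hG.bounds 0 0).smooth
    (aestronglyMeasurable_dirDerivList hG.smooth) fun L K hK => ?_
  obtain ⟨C, -, hGC⟩ := hG.exists_norm_phaseDeriv_le L
  have hcont : Continuous fun q : Phase d =>
      C * (bracket q.2 ^ m * (bracket q.2)⁻¹ ^ fibreCount L) :=
    continuous_const.mul (((continuous_bracket_rpow m).comp continuous_snd).mul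
      (((continuous_bracket.comp continuous_snd).inv₀ fun q => (bracket_pos q.2).ne').pow _))
  obtain ⟨A, hA⟩ := hK.exists_bound_of_continuousOn hcont.continuousOn
  refine ⟨_, integrable_bracket_taylorMeasure.const_mul A, ?_⟩
  filter_upwards [ae_taylorMeasure_mem] with p hp q hq
  exact (hGC p hp q).trans (mul_le_mul_of_nonneg_right ((le_abs_self _).trans (hA q hq))
    (bracket_rpow_nonneg _ _))

theorem isPhaseSymbol_integral (hG : IsRapidSymbolFamily m G) :
    IsPhaseSymbol m fun q => ∫ p, G p q ∂taylorMeasure d := by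
  refine isPhaseSymbol_iff.2 ⟨hG.smoothlyDominated.contDiff_integral, fun K _ L => ?_⟩
  obtain ⟨C, hC, hGC⟩ := hG.exists_norm_phaseDeriv_le L
  refine ⟨C * ∫ p, bracket p.1 ^ (-((d : ℝ) + 1)) ∂taylorMeasure d,
    mul_nonneg hC (integral_nonneg fun p => bracket_rpow_nonneg _ _), fun x _ ξ => ?_⟩
  rw [phaseDeriv, hG.smoothlyDominated.dirDerivList_integral, mul_right_comm,
    ← integral_const_mul]
  exact norm_integral_le_of_norm_le (integrable_bracket_taylorMeasure.const_mul _)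
    (ae_taylorMeasure_mem.mono fun p hp => hGC p hp (x, ξ))

end IsRapidSymbolFamily

end RapidSymbolFamily

/-! ### Multi-indices and Taylor's formula -/

section MultiIndex

variable {d : ℕ}

lemma le_mOrder (α : Fin d → ℕ) (i : Fin d) : α i ≤ mOrder α :=
  Finset.single_le_sum (fun _ _ => Nat.zero_le _) (Finset.mem_univ i)

lemma mem_mIdxLt {N : ℕ} {α : Fin d → ℕ} : α ∈ mIdxLt d N ↔ mOrder α < N := by
  simp only [mIdxLt, Finset.mem_filter, Fintype.mem_piFinset, Finset.mem_range,
    and_iff_right_iff_imp]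
  exact fun h i => (le_mOrder α i).trans_lt h

lemma mem_mIdxEq {N : ℕ} {α : Fin d → ℕ} : α ∈ mIdxEq d N ↔ mOrder α = N := by
  simp only [mIdxEq, Finset.mem_filter, Fintype.mem_piFinset, Finset.mem_range,
    and_iff_right_iff_imp]
  exact fun h i => Nat.lt_succ_of_le (h ▸ le_mOrder α i)

lemma mIdxEq_zero : mIdxEq d 0 = {0} := by
  ext α
  simp [mem_mIdxEq, mOrder, funext_iff]

lemma sum_mIdxLt {M : Type*} [AddCommMonoid M] (N : ℕ) (X : (Fin d → ℕ) → M) :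
    ∑ α ∈ mIdxLt d N, X α = ∑ k ∈ Finset.range N, ∑ α ∈ mIdxEq d k, X α := by
  rw [← Finset.sum_fiberwise_of_maps_to (g := mOrder)
    fun α hα => Finset.mem_range.2 (mem_mIdxLt.1 hα)]
  refine Finset.sum_congr rfl fun k hk => Finset.sum_congr ?_ fun _ _ => rfl
  ext α
  rw [Finset.mem_filter, mem_mIdxLt, mem_mIdxEq, and_iff_right_iff_imp]
  exact fun h => h.trans_lt (Finset.mem_range.1 hk)

lemma mOrder_add_single (α : Fin d → ℕ) (i : Fin d) :
    mOrder (α + Pi.single i 1) = mOrder α + 1 := by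
  simp [mOrder, Finset.sum_add_distrib]

lemma mpow_add_single (ζ : Fin d → ℝ) (α : Fin d → ℕ) (i : Fin d) :
    mpow ζ (α + Pi.single i 1) = mpow ζ α * ζ i := by
  simp only [mpow, Pi.add_apply, pow_add, Finset.prod_mul_distrib]
  simp [Pi.single_apply, pow_ite]

lemma mFactorial_add_single (α : Fin d → ℕ) (i : Fin d) :
    mFactorial (α + Pi.single i 1) = (α i + 1) * mFactorial α := by
  rw [mFactorial, mFactorial, ← Finset.mul_prod_erase _ _ (Finset.mem_univ i),
    ← Finset.mul_prod_erase _ _ (Finset.mem_univ i), ← mul_assoc]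
  congr 1
  · simp [Nat.factorial_succ]
  · refine Finset.prod_congr rfl fun j hj => ?_
    rw [Pi.add_apply, Pi.single_eq_of_ne (Finset.ne_of_mem_erase hj), add_zero]

lemma mFactorial_ne_zero (α : Fin d → ℕ) : mFactorial α ≠ 0 :=
  Finset.prod_ne_zero_iff.2 fun _ _ => Nat.factorial_ne_zero _

variable {E : Type*} [NormedAddCommGroup E] [NormedSpace ℝ E]

lemma sum_mIdxEq_add_single (k : ℕ) (X : (Fin d → ℕ) → E) (i : Fin d) :
    ∑ α ∈ mIdxEq d k, (mFactorial α : ℝ)⁻¹ • X (α + Pi.single i 1) =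
      ∑ β ∈ mIdxEq d (k + 1), (β i : ℝ) • (mFactorial β : ℝ)⁻¹ • X β := by
  refine Finset.sum_of_injOn (· + Pi.single i 1) (fun _ _ _ _ => add_right_cancel) ?_ ?_ ?_
  · intro α hα
    rw [Finset.mem_coe, mem_mIdxEq] at hα ⊢
    rw [mOrder_add_single, hα]
  · intro β hβ hβ'
    suffices hi : β i = 0 by rw [hi, Nat.cast_zero, zero_smul]
    by_contra hi
    have hadd : β - Pi.single i 1 + Pi.single i 1 = β :=
      tsub_add_cancel_of_le
        (update_le_iff.2 ⟨Nat.one_le_iff_ne_zero.2 hi, fun j _ => Nat.zero_le _⟩)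
    refine hβ' ⟨β - Pi.single i 1, ?_, hadd⟩
    have horder := mOrder_add_single (β - Pi.single i 1) i
    rw [hadd, mem_mIdxEq.1 hβ] at horder
    exact mem_mIdxEq.2 (Nat.succ_injective horder).symm
  · intro α _
    have hfac : (mFactorial α : ℝ) ≠ 0 := Nat.cast_ne_zero.2 (mFactorial_ne_zero α)
    rw [mFactorial_add_single, smul_smul, Pi.add_apply, Pi.single_eq_same]
    congr 1
    push_cast
    field_simp

/-- The part `∑_{|α| = k} ζ^α F_α(t) / α!` of order `k` of the Taylor expansion in the direction `ζ`
of a function on a line whose derivatives are encoded by the family `F`. -/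
noncomputable def taylorTerm (ζ : Fin d → ℝ) (F : (Fin d → ℕ) → ℝ → E) (k : ℕ) (t : ℝ) : E :=
  ∑ α ∈ mIdxEq d k, (mFactorial α : ℝ)⁻¹ • mpow ζ α • F α t

variable {ζ : Fin d → ℝ} {F : (Fin d → ℕ) → ℝ → E}

lemma hasDerivAt_taylorTerm
    (hF : ∀ α t, HasDerivAt (F α) (∑ i, ζ i • F (α + Pi.single i 1) t) t) (k : ℕ) (t : ℝ) :
    HasDerivAt (taylorTerm ζ F k) ((k + 1 : ℝ) • taylorTerm ζ F (k + 1) t) t := by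
  have hsum : HasDerivAt (taylorTerm ζ F k) (∑ α ∈ mIdxEq d k,
      (mFactorial α : ℝ)⁻¹ • mpow ζ α • ∑ i, ζ i • F (α + Pi.single i 1) t) t :=
    HasDerivAt.fun_sum fun α _ => ((hF α t).const_smul _).const_smul _
  refine hsum.congr_deriv ?_
  calc ∑ α ∈ mIdxEq d k, (mFactorial α : ℝ)⁻¹ • mpow ζ α • ∑ i, ζ i • F (α + Pi.single i 1) t
      = ∑ i, ∑ α ∈ mIdxEq d k, (mFactorial α : ℝ)⁻¹ •
          mpow ζ (α + Pi.single i 1) • F (α + Pi.single i 1) t := by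
        simp only [Finset.smul_sum, mpow_add_single, mul_smul]
        exact Finset.sum_comm
    _ = ∑ i, ∑ β ∈ mIdxEq d (k + 1), (β i : ℝ) • (mFactorial β : ℝ)⁻¹ • mpow ζ β • F β t :=
        Finset.sum_congr rfl fun i _ =>
          sum_mIdxEq_add_single k (fun β => mpow ζ β • F β t) i
    _ = ∑ β ∈ mIdxEq d (k + 1),
          ((mOrder β : ℕ) : ℝ) • (mFactorial β : ℝ)⁻¹ • mpow ζ β • F β t := by
        rw [Finset.sum_comm]
        simp only [← Finset.sum_smul, mOrder, Nat.cast_sum]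
    _ = (k + 1 : ℝ) • taylorTerm ζ F (k + 1) t := by
        rw [taylorTerm, Finset.smul_sum]
        refine Finset.sum_congr rfl fun β hβ => ?_
        rw [mem_mIdxEq.1 hβ, Nat.cast_succ]

lemma hasDerivAt_sum_taylorTerm
    (hF : ∀ α t, HasDerivAt (F α) (∑ i, ζ i • F (α + Pi.single i 1) t) t) (N : ℕ) (t : ℝ) :
    HasDerivAt (fun t : ℝ => ∑ k ∈ Finset.range N, (1 - t) ^ k • taylorTerm ζ F k t)
      ((N * (1 - t) ^ (N - 1)) • taylorTerm ζ F N t) t := by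
  induction N with
  | zero => simpa using hasDerivAt_const t (0 : E)
  | succ N ih =>
    simp only [Finset.sum_range_succ]
    have hpow := ((hasDerivAt_id t).const_sub 1).pow N
    refine (ih.add (hpow.smul (hasDerivAt_taylorTerm hF N t))).congr_deriv ?_
    simp only [id_eq, Nat.add_sub_cancel, Pi.pow_apply]
    module

lemma integral_smul_taylorTerm (hF : ∀ α, Continuous (F α)) (N : ℕ) :
    ∫ t in (0 : ℝ)..1, (N * (1 - t) ^ (N - 1)) • taylorTerm ζ F N t =
      ∑ α ∈ mIdxEq d N, (N / mFactorial α : ℝ) •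
        ∫ t in Set.Icc (0 : ℝ) 1, ((1 - t) ^ (N - 1) * mpow ζ α) • F α t := by
  have hterm (t : ℝ) : (N * (1 - t) ^ (N - 1)) • taylorTerm ζ F N t =
      ∑ α ∈ mIdxEq d N, (N / mFactorial α : ℝ) • ((1 - t) ^ (N - 1) * mpow ζ α) • F α t := by
    rw [taylorTerm, Finset.smul_sum]
    refine Finset.sum_congr rfl fun α _ => ?_
    rw [div_eq_mul_inv]
    module
  rw [intervalIntegral.integral_of_le zero_le_one, ← integral_Icc_eq_integral_Ioc]
  simp only [hterm]
  rw [integral_finsetSum _ fun α _ => Continuous.integrableOn_Icc (by fun_prop)]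
  simp only [integral_smul]

theorem taylor_formula [CompleteSpace E]
    (hF : ∀ α t, HasDerivAt (F α) (∑ i, ζ i • F (α + Pi.single i 1) t) t) {N : ℕ} (hN : 1 ≤ N) :
    F 0 1 = ∑ α ∈ mIdxLt d N, (mFactorial α : ℝ)⁻¹ • mpow ζ α • F α 0 +
      ∑ α ∈ mIdxEq d N, (N / mFactorial α : ℝ) •
        ∫ t in Set.Icc (0 : ℝ) 1, ((1 - t) ^ (N - 1) * mpow ζ α) • F α t := by
  have hcont (α : Fin d → ℕ) : Continuous (F α) :=
    continuous_iff_continuousAt.2 fun t => (hF α t).continuousAt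
  have hone : ∑ k ∈ Finset.range N, (1 - 1 : ℝ) ^ k • taylorTerm ζ F k 1 = F 0 1 := by
    obtain ⟨n, rfl⟩ := Nat.exists_eq_add_of_le' hN
    simp [Finset.sum_range_succ', taylorTerm, mIdxEq_zero, mFactorial, mpow]
  have hzero : ∑ k ∈ Finset.range N, (1 - 0 : ℝ) ^ k • taylorTerm ζ F k 0 =
      ∑ α ∈ mIdxLt d N, (mFactorial α : ℝ)⁻¹ • mpow ζ α • F α 0 := by
    simp [sum_mIdxLt, taylorTerm]
  have hcontTerm : Continuous (taylorTerm ζ F N) :=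
    continuous_finsetSum _ fun α _ => ((hcont α).const_smul _).const_smul _
  have hint := intervalIntegral.integral_eq_sub_of_hasDerivAt (a := 0) (b := 1)
    (fun t _ => hasDerivAt_sum_taylorTerm hF N t) (Continuous.intervalIntegrable (by fun_prop) _ _)
  rw [integral_smul_taylorTerm hcont, hone, hzero] at hint
  rw [hint, add_sub_cancel]

end MultiIndex

/-! ### Expansion of the symbol of the product -/

section FourierOfCompactlySupported

variable {d : ℕ} {f : Phase d → ℂ} {K : Set (Fin d → ℝ)}

lemma hasCompactSupport_slice (hK : IsCompact K) (hfK : ∀ q : Phase d, q.1 ∉ K → f q = 0)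
    (ξ : Fin d → ℝ) : HasCompactSupport fun y => f (y, ξ) :=
  HasCompactSupport.intro hK fun y hy => hfK (y, ξ) hy

lemma integrable_planeWave_mul_partialFourier (hf : ContDiff ℝ ∞ f) (hK : IsCompact K)
    (hfK : ∀ q : Phase d, q.1 ∉ K → f q = 0) (x ξ : Fin d → ℝ) :
    Integrable fun ζ => planeWave x ζ * partialFourier f ζ ξ := by
  simp only [planeWave_comm x]
  exact integrable_planeWave_mul (integrable_fourierInt_of_hasCompactSupport
    (hf.comp (contDiff_prodMk_left ξ)) (hasCompactSupport_slice hK hfK ξ)) x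

lemma integral_planeWave_mul_partialFourier (hf : ContDiff ℝ ∞ f) (hK : IsCompact K)
    (hfK : ∀ q : Phase d, q.1 ∉ K → f q = 0) (x ξ : Fin d → ℝ) :
    (((2 * Real.pi) ^ (-(d : ℝ)) : ℝ) : ℂ) * ∫ ζ, planeWave x ζ * partialFourier f ζ ξ =
      f (x, ξ) := by
  have hslice : ContDiff ℝ ∞ fun y => f (y, ξ) := hf.comp (contDiff_prodMk_left ξ)
  have hsupp := hasCompactSupport_slice hK hfK ξ
  exact integral_planeWave_mul_fourierInt hslice.continuous
    (hslice.continuous.integrable_of_hasCompactSupport hsupp)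
    (integrable_fourierInt_of_hasCompactSupport hslice hsupp) x

lemma partialFourier_sum {ι : Type*} [Fintype ι] (c : ι → ℂ) {g : ι → Phase d → ℂ}
    (hg : ∀ i, Continuous (g i)) (hK : IsCompact K) (hgK : ∀ i q, q.1 ∉ K → g i q = 0)
    (ζ ξ : Fin d → ℝ) :
    partialFourier (fun q => ∑ i, c i * g i q) ζ ξ = ∑ i, c i * partialFourier (g i) ζ ξ := by
  have hint (i : ι) : Integrable fun y => planeWave y (-ζ) * g i (y, ξ) :=
    integrable_planeWave_mul (((hg i).comp (by fun_prop)).integrable_of_hasCompactSupport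
      (hasCompactSupport_slice hK (hgK i) ξ)) (-ζ)
  simp only [partialFourier, fourierInt, Finset.mul_sum, mul_left_comm (planeWave _ _)]
  rw [integral_finsetSum _ fun i _ => (hint i).const_mul (c i)]
  simp only [integral_const_mul]

lemma hasDerivAt_partialFourier {g g' : ℝ → Phase d → ℂ}
    (hg : ContDiff ℝ ∞ fun z : ℝ × Phase d => g z.1 z.2) (hK : IsCompact K)
    (hgK : ∀ t q, q.1 ∉ K → g t q = 0) (hg' : ∀ t q, HasDerivAt (fun t => g t q) (g' t q) t)
    (ζ ξ : Fin d → ℝ) (t : ℝ) :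
    HasDerivAt (fun t => partialFourier (g t) ζ ξ) (partialFourier (g' t) ζ ξ) t := by
  have hg'K (q : Phase d) (hq : q.1 ∉ K) : g' t q = 0 := by
    have hzero : (fun t => g t q) = fun _ => 0 := funext fun t => hgK t q hq
    exact (hg' t q).unique (hzero ▸ hasDerivAt_const t 0)
  have hintegrand : ContDiff ℝ ∞ fun z : (Fin d → ℝ) × ℝ =>
      planeWave z.1 (-ζ) * g z.2 (z.1, ξ) :=
    ((contDiff_planeWave_left (-ζ)).comp contDiff_fst).mul
      (hg.comp (f := fun z : (Fin d → ℝ) × ℝ => (z.2, (z.1, ξ))) (by fun_prop))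
  have hdom := smoothlyDominated_restrict_of_isCompact (ν := volume) hintegrand hK
  simp only [fun t => partialFourier_eq_setIntegral (hgK t) ζ ξ,
    partialFourier_eq_setIntegral hg'K ζ ξ]
  refine (hdom.hasFDerivAt_integral t).hasDerivAt.congr_deriv ?_
  rw [ContinuousLinearMap.integral_apply (hdom.integrable_fderiv t)]
  exact integral_congr_ae (Eventually.of_forall fun y =>
    ((hg' t (y, ξ)).const_mul (planeWave y (-ζ))).deriv)

lemma fourierInt_const_mul (c : ℂ) (u : (Fin d → ℝ) → ℂ) (ζ : Fin d → ℝ) :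
    fourierInt (fun y => c * u y) ζ = c * fourierInt u ζ := by
  simp only [fourierInt, mul_left_comm _ c, integral_const_mul]

/-- The derivative `D_x^α = (-i∂_x)^α` in the base variable of a function on phase space. -/
noncomputable def baseD (α : Fin d → ℕ) (f : Phase d → ℂ) (q : Phase d) : ℂ :=
  (-Complex.I) ^ mOrder α * phaseDeriv ((indexList α).map Sum.inl) f q

lemma contDiff_baseD (hf : ContDiff ℝ ∞ f) (α : Fin d → ℕ) : ContDiff ℝ ∞ (baseD α f) :=
  contDiff_const.mul (contDiff_dirDerivList hf _)

lemma baseD_eq_zero_of_notMem (hK : IsCompact K) (hfK : ∀ q : Phase d, q.1 ∉ K → f q = 0)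
    (α : Fin d → ℕ) (q : Phase d) (hq : q.1 ∉ K) : baseD α f q = 0 := by
  rw [baseD, phaseDeriv, dirDerivList_eq_zero_of_notMem hK.isClosed hfK _ q hq, mul_zero]

lemma prod_map_indexList (α : Fin d → ℕ) (ζ : Fin d → ℝ) :
    ((indexList α).map fun i => (ζ i : ℂ)).prod = mpow ζ α := by
  have hflat (l : List (Fin d)) : ((l.flatMap fun i => List.replicate (α i) i).map
      fun i => (ζ i : ℂ)).prod = (l.map fun i => (ζ i : ℂ) ^ α i).prod := by
    induction l with
    | nil => rfl
    | cons i l ih => simp [ih]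
  rw [mpow, Complex.ofReal_prod]
  simp only [indexList, hflat, Complex.ofReal_pow, Fin.prod_univ_def]

lemma partialFourier_baseD (hf : ContDiff ℝ ∞ f) (hK : IsCompact K)
    (hfK : ∀ q : Phase d, q.1 ∉ K → f q = 0) (α : Fin d → ℕ) (ζ ξ : Fin d → ℝ) :
    partialFourier (baseD α f) ζ ξ = mpow ζ α * partialFourier f ζ ξ := by
  have hslice : ContDiff ℝ ∞ fun y => f (y, ξ) := hf.comp (contDiff_prodMk_left ξ)
  have hint (l : List (Fin d → ℝ)) : Integrable (dirDerivList l fun y => f (y, ξ)) :=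
    (contDiff_dirDerivList hslice l).continuous.integrable_of_hasCompactSupport
      (HasCompactSupport.intro hK (dirDerivList_eq_zero_of_eqOn_open hK.isClosed.isOpen_compl
        (fun y hy => hfK (y, ξ) hy) l))
  have hprod : (((indexList α).map (Pi.basisFun ℝ (Fin d))).map
      fun v => Complex.I * (dotp v ζ : ℂ)).prod = Complex.I ^ mOrder α * mpow ζ α := by
    rw [List.map_map, ← length_indexList, ← prod_map_indexList, ← List.prod_replicate,
      ← List.map_const', ← List.prod_map_mul]
    simp only [Function.comp_def, dotp_eq_dotProduct, Pi.basisFun_apply, single_one_dotProduct]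
  have hderiv := fourierInt_dirDerivList hslice hint ((indexList α).map (Pi.basisFun ℝ (Fin d))) ζ
  have hbase : (fun y => baseD α f (y, ξ)) = fun y => (-Complex.I) ^ mOrder α *
      dirDerivList ((indexList α).map (Pi.basisFun ℝ (Fin d))) (fun y => f (y, ξ)) y :=
    funext fun y => by rw [baseD, phaseDeriv_map_inl hf]
  have hI : (-Complex.I) ^ mOrder α * Complex.I ^ mOrder α = 1 := by
    rw [← mul_pow, neg_mul, Complex.I_mul_I, neg_neg, one_pow]
  rw [partialFourier, hbase, fourierInt_const_mul, hderiv, hprod, ← mul_assoc, ← mul_assoc, hI,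
    one_mul, partialFourier]

end FourierOfCompactlySupported

section CrossAmplitude

variable {d : ℕ} {a a₁ a₂ : Phase d → ℂ} {K : Set (Fin d → ℝ)}

lemma contDiff_crossAmplitude (h₁ : ContDiff ℝ ∞ a₁) (h₂ : ContDiff ℝ ∞ a₂) :
    ContDiff ℝ ∞ fun z : ((Fin d → ℝ) × ℝ) × Phase d => crossAmplitude a₁ a₂ z.1 z.2 := by
  refine (h₁.comp contDiff_snd).mul (Complex.conjCLE.contDiff.comp (h₂.comp ?_))
  fun_prop

lemma crossAmplitude_eq_zero_of_notMem (h₁K : ∀ q : Phase d, q.1 ∉ K → a₁ q = 0)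
    (p : (Fin d → ℝ) × ℝ) (q : Phase d) (hq : q.1 ∉ K) : crossAmplitude a₁ a₂ p q = 0 := by
  rw [crossAmplitude, h₁K q hq, zero_mul]

/-- The derivative `∂_ξ^α` in the fibre variable of a function on phase space. -/
noncomputable def fibreDeriv (α : Fin d → ℕ) (a : Phase d → ℂ) : Phase d → ℂ :=
  phaseDeriv ((indexList α).map Sum.inr) a

lemma fibreDeriv_zero : fibreDeriv 0 a = a := by
  have hnil : indexList (0 : Fin d → ℕ) = [] := by simp [indexList]
  rw [fibreDeriv, hnil, List.map_nil, phaseDeriv_nil]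

lemma contDiff_fibreDeriv (ha : ContDiff ℝ ∞ a) (α : Fin d → ℕ) : ContDiff ℝ ∞ (fibreDeriv α a) :=
  contDiff_dirDerivList ha _

lemma perm_indexList_add_single (α : Fin d → ℕ) (i : Fin d) :
    (i :: indexList α).Perm (indexList (α + Pi.single i 1)) := by
  refine List.perm_iff_count.2 fun j => ?_
  rw [List.count_cons, count_indexList, count_indexList, Pi.add_apply, Pi.single_apply]
  simp only [beq_iff_eq, @eq_comm _ j]

lemma fderiv_fibreDeriv (ha : ContDiff ℝ ∞ a) (α : Fin d → ℕ) (q : Phase d) (ζ : Fin d → ℝ) :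
    fderiv ℝ (fibreDeriv α a) q (0, ζ) = ∑ i, (ζ i : ℂ) * fibreDeriv (α + Pi.single i 1) a q := by
  have hζ : ((0, ζ) : Phase d) = ∑ i, ζ i • phaseBasis d (Sum.inr i) := by
    ext i <;> simp [phaseBasis_inr, Prod.fst_sum, Prod.snd_sum, Finset.sum_apply, Pi.single_apply]
  rw [hζ, map_sum]
  refine Finset.sum_congr rfl fun i _ => ?_
  rw [map_smul, Complex.real_smul, fibreDeriv, fibreDeriv,
    ← phaseDeriv_perm ha ((perm_indexList_add_single α i).map Sum.inr)]
  rfl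

lemma hasDerivAt_crossAmplitude (h₂ : ContDiff ℝ ∞ a₂) (α : Fin d → ℕ) (ζ : Fin d → ℝ)
    (t : ℝ) (q : Phase d) :
    HasDerivAt (fun t => crossAmplitude a₁ (fibreDeriv α a₂) (ζ, t) q)
      (∑ i, (ζ i : ℂ) * crossAmplitude a₁ (fibreDeriv (α + Pi.single i 1) a₂) (ζ, t) q) t := by
  have hline : HasDerivAt (fun t : ℝ => q + (0, t • ζ)) (0, ζ) t := by
    refine HasDerivAt.const_add _ ((hasDerivAt_const t 0).prodMk ?_)
    simpa using (hasDerivAt_id t).smul_const ζ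
  have hchain := (differentiable_of_smooth (contDiff_fibreDeriv h₂ α)
    (q + (0, t • ζ))).hasFDerivAt.comp_hasDerivAt t hline
  refine ((Complex.conjCLE.hasFDerivAt.comp_hasDerivAt t hchain).const_mul (a₁ q)).congr_deriv ?_
  simp only [fderiv_fibreDeriv h₂, crossAmplitude, map_sum, map_mul, Finset.mul_sum,
    ContinuousLinearEquiv.coe_coe, Complex.conjCLE_apply, Complex.conj_ofReal, mul_left_comm]

lemma hasDerivAt_partialFourier_crossAmplitude (h₁ : ContDiff ℝ ∞ a₁) (h₂ : ContDiff ℝ ∞ a₂)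
    (hK : IsCompact K) (h₁K : ∀ q : Phase d, q.1 ∉ K → a₁ q = 0) (ζ ξ : Fin d → ℝ)
    (α : Fin d → ℕ) (t : ℝ) :
    HasDerivAt (fun t => partialFourier (crossAmplitude a₁ (fibreDeriv α a₂) (ζ, t)) ζ ξ)
      (∑ i, ζ i • partialFourier
        (crossAmplitude a₁ (fibreDeriv (α + Pi.single i 1) a₂) (ζ, t)) ζ ξ) t := by
  have hsmooth (β : Fin d → ℕ) := contDiff_crossAmplitude h₁ (contDiff_fibreDeriv h₂ β)
  have hderiv := hasDerivAt_partialFourier (K := K)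
    ((hsmooth α).comp (f := fun z : ℝ × Phase d => ((ζ, z.1), z.2)) (by fun_prop)) hK
    (fun t => crossAmplitude_eq_zero_of_notMem h₁K (ζ, t))
    (hasDerivAt_crossAmplitude h₂ α ζ) ζ ξ t
  refine hderiv.congr_deriv ?_
  simp only [Complex.real_smul]
  exact partialFourier_sum _
    (fun i => ((hsmooth _).comp (contDiff_prodMk_right (ζ, t))).continuous) hK
    (fun i => crossAmplitude_eq_zero_of_notMem h₁K (ζ, t)) ζ ξ

lemma crossAmplitude_apply_zero (ζ : Fin d → ℝ) :
    crossAmplitude a₁ a₂ (ζ, 0) = fun q => a₁ q * (starRingEnd ℂ) (a₂ q) := by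
  funext q
  simp only [crossAmplitude, zero_smul, Prod.mk_zero_zero, add_zero]

end CrossAmplitude

section Expansion

variable {d : ℕ} {a₁ a₂ : Phase d → ℂ} {K : Set (Fin d → ℝ)}

/-- The symbol of `A₂* A₁`, for `A_j` with symbol `a_j`. -/
noncomputable def adjointProductSymbol (a₁ a₂ : Phase d → ℂ) (x ξ : Fin d → ℝ) : ℂ :=
  (((2 * Real.pi) ^ (-(d : ℝ)) : ℝ) : ℂ) * ∫ ζ, ∫ y, a₁ (y, ξ) *
    (starRingEnd ℂ) (a₂ (y, ξ + ζ)) * Complex.exp (Complex.I * (dotp (x - y) ζ : ℂ))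

/-- The term `h_α = D_x^α (a₁ · conj (∂_ξ^α a₂))` of the expansion of `adjointProductSymbol`,
without the factor `1 / α!`. -/
noncomputable def expansionTerm (α : Fin d → ℕ) (a₁ a₂ : Phase d → ℂ) : Phase d → ℂ :=
  baseD α fun q => a₁ q * (starRingEnd ℂ) (fibreDeriv α a₂ q)

/-- The weight `(1 - t)^(N - 1) ζ^α` of Taylor's integral remainder at the parameter `(ζ, t)`. -/
noncomputable def taylorWeight (N : ℕ) (α : Fin d → ℕ) (p : (Fin d → ℝ) × ℝ) : ℂ :=
  (((1 - p.2) ^ (N - 1) * mpow p.1 α : ℝ) : ℂ)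

/-- The functions whose integral over `(ζ, t)` is the contribution of the multi-index `α`, of order
`N`, to the remainder of the expansion of `adjointProductSymbol`. -/
noncomputable def remainderFamily (N : ℕ) (α : Fin d → ℕ) (a₁ a₂ : Phase d → ℂ)
    (p : (Fin d → ℝ) × ℝ) (q : Phase d) : ℂ :=
  taylorWeight N α p *
    (planeWave q.1 p.1 * partialFourier (crossAmplitude a₁ (fibreDeriv α a₂) p) p.1 q.2)

lemma contDiff_taylorWeight (N : ℕ) (α : Fin d → ℕ) : ContDiff ℝ ∞ (taylorWeight N α) := by
  refine Complex.ofRealCLM.contDiff.comp (ContDiff.mul (by fun_prop) ?_)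
  exact contDiff_prod fun i _ => by fun_prop

lemma abs_mpow_le (ζ : Fin d → ℝ) (α : Fin d → ℕ) : |mpow ζ α| ≤ bracket ζ ^ mOrder α := by
  rw [mpow, Finset.abs_prod, mOrder, ← Finset.prod_pow_eq_pow_sum]
  refine Finset.prod_le_prod (fun _ _ => abs_nonneg _) fun i _ => ?_
  rw [abs_pow]
  exact pow_le_pow_left₀ (abs_nonneg _) ((norm_le_pi_norm ζ i).trans (norm_le_bracket ζ)) _

lemma norm_taylorWeight_le (N : ℕ) (α : Fin d → ℕ) (p : (Fin d → ℝ) × ℝ)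
    (hp : p.2 ∈ Set.Icc (0 : ℝ) 1) : ‖taylorWeight N α p‖ ≤ bracket p.1 ^ mOrder α := by
  have hle : |1 - p.2| ≤ 1 := abs_le.2 ⟨by linarith [hp.2], by linarith [hp.1]⟩
  rw [taylorWeight, Complex.norm_real, Real.norm_eq_abs, abs_mul, abs_pow,
    ← one_mul (bracket p.1 ^ mOrder α)]
  exact mul_le_mul (pow_le_one₀ (abs_nonneg _) hle) (abs_mpow_le p.1 α) (abs_nonneg _) zero_le_one

lemma adjointProductSymbol_eq_integral (x ξ : Fin d → ℝ) :
    adjointProductSymbol a₁ a₂ x ξ = (((2 * Real.pi) ^ (-(d : ℝ)) : ℝ) : ℂ) *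
      ∫ ζ, planeWave x ζ * partialFourier (crossAmplitude a₁ a₂ (ζ, 1)) ζ ξ := by
  rw [adjointProductSymbol]
  congr 2 with ζ
  rw [partialFourier, fourierInt, ← integral_const_mul]
  congr 1 with y
  have hwave : Complex.exp (Complex.I * (dotp (x - y) ζ : ℂ)) = planeWave x ζ * planeWave y (-ζ) :=
    planeWave_sub_left x y ζ
  rw [hwave, crossAmplitude, one_smul, Prod.mk_add_mk, add_zero]
  ring

lemma contDiff_mul_conj (h₁ : ContDiff ℝ ∞ a₁) (h₂ : ContDiff ℝ ∞ a₂) :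
    ContDiff ℝ ∞ fun q => a₁ q * (starRingEnd ℂ) (a₂ q) :=
  h₁.mul (Complex.conjCLE.contDiff.comp h₂)

lemma contDiff_expansionTerm (h₁ : ContDiff ℝ ∞ a₁) (h₂ : ContDiff ℝ ∞ a₂) (α : Fin d → ℕ) :
    ContDiff ℝ ∞ (expansionTerm α a₁ a₂) :=
  contDiff_baseD (contDiff_mul_conj h₁ (contDiff_fibreDeriv h₂ α)) α

lemma expansionTerm_eq_zero_of_notMem (hK : IsCompact K) (h₁K : ∀ q : Phase d, q.1 ∉ K → a₁ q = 0)
    (α : Fin d → ℕ) (q : Phase d) (hq : q.1 ∉ K) : expansionTerm α a₁ a₂ q = 0 :=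
  baseD_eq_zero_of_notMem hK (fun q hq => by rw [h₁K q hq, zero_mul]) α q hq

lemma expansionTerm_eq_mpderiv (h₁ : ContDiff ℝ ∞ a₁) (h₂ : ContDiff ℝ ∞ a₂) (α : Fin d → ℕ)
    (x ξ : Fin d → ℝ) :
    expansionTerm α a₁ a₂ (x, ξ) = (-Complex.I) ^ mOrder α *
      mpderiv α (fun y => a₁ (y, ξ) *
        (starRingEnd ℂ) (mpderiv α (fun η => a₂ (y, η)) ξ)) x := by
  simp only [mpderiv_snd_eq_phaseDeriv h₂]
  rw [mpderiv_fst_eq_phaseDeriv (contDiff_mul_conj h₁ (contDiff_dirDerivList h₂ _))]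
  rfl

lemma planeWave_mul_partialFourier_eq_sum_add_sum (h₁ : ContDiff ℝ ∞ a₁) (h₂ : ContDiff ℝ ∞ a₂)
    (hK : IsCompact K) (h₁K : ∀ q : Phase d, q.1 ∉ K → a₁ q = 0) {N : ℕ} (hN : 1 ≤ N)
    (x ξ ζ : Fin d → ℝ) :
    planeWave x ζ * partialFourier (crossAmplitude a₁ a₂ (ζ, 1)) ζ ξ =
      ∑ α ∈ mIdxLt d N, (mFactorial α : ℂ)⁻¹ *
        (planeWave x ζ * partialFourier (expansionTerm α a₁ a₂) ζ ξ) +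
      ∑ α ∈ mIdxEq d N, (N / mFactorial α : ℂ) *
        ∫ t in Set.Icc (0 : ℝ) 1, remainderFamily N α a₁ a₂ (ζ, t) (x, ξ) := by
  have hterm (α : Fin d → ℕ) :
      mpow ζ α • partialFourier (crossAmplitude a₁ (fibreDeriv α a₂) (ζ, 0)) ζ ξ =
        partialFourier (expansionTerm α a₁ a₂) ζ ξ := by
    rw [expansionTerm, partialFourier_baseD (contDiff_mul_conj h₁ (contDiff_fibreDeriv h₂ α)) hK
      (fun q hq => by rw [h₁K q hq, zero_mul]), crossAmplitude_apply_zero, Complex.real_smul]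
  have htaylor := taylor_formula (hasDerivAt_partialFourier_crossAmplitude h₁ h₂ hK h₁K ζ ξ) hN
  rw [fibreDeriv_zero] at htaylor
  simp only [htaylor, hterm, mul_add, Finset.mul_sum, remainderFamily, taylorWeight,
    Complex.real_smul, mul_left_comm _ (planeWave x ζ), integral_const_mul, Complex.ofReal_inv,
    Complex.ofReal_div, Complex.ofReal_natCast]

theorem adjointProductSymbol_eq_sum_add_sum (h₁ : ContDiff ℝ ∞ a₁) (h₂ : ContDiff ℝ ∞ a₂)
    (hK : IsCompact K) (h₁K : ∀ q : Phase d, q.1 ∉ K → a₁ q = 0) {N : ℕ} (hN : 1 ≤ N)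
    (x ξ : Fin d → ℝ)
    (hint : ∀ α, Integrable (fun p => remainderFamily N α a₁ a₂ p (x, ξ)) (taylorMeasure d)) :
    adjointProductSymbol a₁ a₂ x ξ =
      ∑ α ∈ mIdxLt d N, (mFactorial α : ℂ)⁻¹ * expansionTerm α a₁ a₂ (x, ξ) +
      (((2 * Real.pi) ^ (-(d : ℝ)) : ℝ) : ℂ) * ∑ α ∈ mIdxEq d N, (N / mFactorial α : ℂ) *
        ∫ p, remainderFamily N α a₁ a₂ p (x, ξ) ∂taylorMeasure d := by
  have hmain (α : Fin d → ℕ) :=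
    integrable_planeWave_mul_partialFourier (contDiff_expansionTerm h₁ h₂ α) hK
      (expansionTerm_eq_zero_of_notMem hK h₁K α) x ξ
  have hrem (α : Fin d → ℕ) :
      Integrable fun ζ => ∫ t in Set.Icc (0 : ℝ) 1, remainderFamily N α a₁ a₂ (ζ, t) (x, ξ) :=
    (hint α).integral_prod_left
  rw [adjointProductSymbol_eq_integral]
  simp only [planeWave_mul_partialFourier_eq_sum_add_sum h₁ h₂ hK h₁K hN x ξ]
  rw [integral_add (integrable_finsetSum _ fun α _ => (hmain α).const_mul _)
      (integrable_finsetSum _ fun α _ => (hrem α).const_mul _),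
    integral_finsetSum _ fun α _ => (hmain α).const_mul _,
    integral_finsetSum _ fun α _ => (hrem α).const_mul _, mul_add, Finset.mul_sum]
  congr 1
  · refine Finset.sum_congr rfl fun α _ => ?_
    rw [integral_const_mul, mul_left_comm,
      integral_planeWave_mul_partialFourier (contDiff_expansionTerm h₁ h₂ α) hK
        (expansionTerm_eq_zero_of_notMem hK h₁K α)]
  · refine congrArg _ (Finset.sum_congr rfl fun α _ => ?_)
    rw [integral_const_mul, taylorMeasure, integral_prod _ (hint α)]

end Expansion

/-! ### The product of the operators -/

section OperatorProduct

variable {d : ℕ} {a₁ a₂ : Phase d → ℂ} {K : Set (Fin d → ℝ)}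

lemma planeWave_sub_left_mul_planeWave (x y η ξ : Fin d → ℝ) :
    planeWave (x - y) η * planeWave y ξ = planeWave x η * planeWave y (-(η - ξ)) := by
  rw [planeWave_sub_left, mul_assoc, ← planeWave_add_right, neg_sub, neg_add_eq_sub]

lemma integrable_mul_schwartz_of_norm_le {F : Phase d → ℂ} (hF : Continuous F) (hK : IsCompact K)
    (hFK : ∀ q : Phase d, q.1 ∉ K → F q = 0) {C m : ℝ}
    (hFC : ∀ y ∈ K, ∀ ξ, ‖F (y, ξ)‖ ≤ C * bracket ξ ^ m) (v : SchwartzMap (Fin d → ℝ) ℂ) :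
    Integrable (fun q : Phase d => F q * v q.2) (volume.prod volume) := by
  have hbound : Integrable (fun q : Phase d =>
      K.indicator (fun _ => C) q.1 * (bracket q.2 ^ m * ‖v q.2‖)) (volume.prod volume) :=
    ((integrableOn_const hK.measure_lt_top.ne).integrable_indicator hK.measurableSet).mul_prod
      (integrable_bracket_rpow_mul_norm v m)
  refine hbound.mono' (hF.mul (v.continuous.comp continuous_snd)).aestronglyMeasurable
    (Eventually.of_forall fun q => ?_)
  by_cases hq : q.1 ∈ K
  · rw [Set.indicator_of_mem hq, norm_mul, ← mul_assoc]
    exact mul_le_mul_of_nonneg_right (hFC q.1 hq q.2) (norm_nonneg _)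
  · rw [hFK q hq, Set.indicator_of_notMem hq, zero_mul, zero_mul, norm_zero]

lemma integral_planeWave_mul_conj_mul_integral (h₁ : Continuous a₁) (h₂ : Continuous a₂)
    (hK : IsCompact K) (h₁K : ∀ q : Phase d, q.1 ∉ K → a₁ q = 0) {C m : ℝ}
    (hC : ∀ y ∈ K, ∀ ξ, ‖a₁ (y, ξ)‖ ≤ C * bracket ξ ^ m) (v : SchwartzMap (Fin d → ℝ) ℂ)
    (x η : Fin d → ℝ) :
    ∫ y, planeWave (x - y) η * (starRingEnd ℂ) (a₂ (y, η)) *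
        ∫ ξ, planeWave y ξ * a₁ (y, ξ) * v ξ =
      ∫ ξ, planeWave x η *
        (partialFourier (crossAmplitude a₁ a₂ (η - ξ, 1)) (η - ξ) ξ * v ξ) := by
  have hg : Continuous fun y => planeWave (x - y) η * (starRingEnd ℂ) (a₂ (y, η)) :=
    ((contDiff_planeWave_left η).continuous.comp (continuous_const.sub continuous_id)).mul
      (Complex.continuous_conj.comp (h₂.comp (by fun_prop)))
  obtain ⟨A, hA⟩ := hK.exists_bound_of_continuousOn hg.continuousOn
  have hint := integrable_mul_schwartz_of_norm_le (C := A * C) (m := m)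
    (F := fun q => planeWave (x - q.1) η * (starRingEnd ℂ) (a₂ (q.1, η)) *
      (planeWave q.1 q.2 * a₁ q))
    ((hg.comp continuous_fst).mul (contDiff_planeWave.continuous.mul h₁)) hK
    (fun q hq => by rw [h₁K q hq, mul_zero, mul_zero]) (fun y hy ξ => ?_) v
  · simp only [← integral_const_mul, ← mul_assoc] at hint ⊢
    rw [integral_integral_swap hint]
    congr 1 with ξ
    rw [partialFourier, fourierInt, ← integral_const_mul, ← integral_mul_const]
    congr 1 with y
    rw [crossAmplitude, one_smul, Prod.mk_add_mk, add_zero, add_sub_cancel]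
    linear_combination (a₁ (y, ξ) * (starRingEnd ℂ) (a₂ (y, η)) * v ξ) *
      planeWave_sub_left_mul_planeWave x y η ξ
  · rw [norm_mul, norm_mul (planeWave y ξ), norm_planeWave, one_mul, mul_assoc]
    exact mul_le_mul (hA y hy) (hC y hy ξ) (norm_nonneg _) ((norm_nonneg _).trans (hA y hy))

lemma integrable_planeWave_mul_partialFourier_mul (h₁ : ContDiff ℝ ∞ a₁) (h₂ : ContDiff ℝ ∞ a₂)
    (hK : IsCompact K) (h₁K : ∀ q : Phase d, q.1 ∉ K → a₁ q = 0) {C m : ℝ}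
    (hC : ∀ ζ ξ, ‖partialFourier (crossAmplitude a₁ a₂ (ζ, 1)) ζ ξ‖ ≤
      C * (bracket ξ ^ m * bracket ζ ^ (-((d : ℝ) + 1))))
    (v : SchwartzMap (Fin d → ℝ) ℂ) (x : Fin d → ℝ) :
    Integrable (fun w : Phase d => planeWave x w.1 *
      (partialFourier (crossAmplitude a₁ a₂ (w.1 - w.2, 1)) (w.1 - w.2) w.2 * v w.2))
      (volume.prod volume) := by
  have hfourier : Continuous fun w : Phase d =>
      partialFourier (crossAmplitude a₁ a₂ (w.1 - w.2, 1)) (w.1 - w.2) w.2 :=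
    (contDiff_partialFourier (contDiff_crossAmplitude h₁ h₂) hK
      (crossAmplitude_eq_zero_of_notMem h₁K)).continuous.comp
      (f := fun w : Phase d => ((w.1 - w.2, 1), (w.1 - w.2, w.2))) (by fun_prop)
  have hwave : Continuous fun w : Phase d => planeWave x w.1 :=
    contDiff_planeWave.continuous.comp (f := fun w : Phase d => (x, w.1)) (by fun_prop)
  have hbound := ((integrable_bracket_rpow_mul_norm v m).convolution_integrand
    (ContinuousLinearMap.mul ℝ ℝ) integrable_bracket_rpow_neg).const_mul C
  refine hbound.mono'
    (hwave.mul (hfourier.mul (v.continuous.comp continuous_snd))).aestronglyMeasurable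
    (Eventually.of_forall fun w => ?_)
  rw [norm_mul, norm_planeWave, one_mul, norm_mul, ContinuousLinearMap.mul_apply',
    mul_right_comm, ← mul_assoc, mul_right_comm]
  exact (mul_le_mul_of_nonneg_right (hC (w.1 - w.2) w.2) (norm_nonneg _)).trans_eq (by ring)

lemma integral_integral_planeWave_mul_partialFourier (h₁ : ContDiff ℝ ∞ a₁)
    (h₂ : ContDiff ℝ ∞ a₂) (hK : IsCompact K) (h₁K : ∀ q : Phase d, q.1 ∉ K → a₁ q = 0) {C m : ℝ}
    (hC : ∀ ζ ξ, ‖partialFourier (crossAmplitude a₁ a₂ (ζ, 1)) ζ ξ‖ ≤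
      C * (bracket ξ ^ m * bracket ζ ^ (-((d : ℝ) + 1))))
    (v : SchwartzMap (Fin d → ℝ) ℂ) (x : Fin d → ℝ) :
    ∫ η, ∫ ξ, planeWave x η *
        (partialFourier (crossAmplitude a₁ a₂ (η - ξ, 1)) (η - ξ) ξ * v ξ) =
      ∫ ξ, planeWave x ξ *
        (∫ ζ, planeWave x ζ * partialFourier (crossAmplitude a₁ a₂ (ζ, 1)) ζ ξ) * v ξ := by
  rw [integral_integral_swap (integrable_planeWave_mul_partialFourier_mul h₁ h₂ hK h₁K hC v x)]
  congr 1 with ξ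
  rw [← integral_add_right_eq_self _ ξ, ← integral_const_mul, ← integral_mul_const]
  congr 1 with ζ
  rw [add_sub_cancel_right, planeWave_add_right]
  ring

lemma exists_schwartzMap_eq_fourierHat (u : SchwartzMap (Fin d → ℝ) ℂ) :
    ∃ v : SchwartzMap (Fin d → ℝ) ℂ, fourierHat u = v := by
  obtain ⟨v, hv⟩ := exists_schwartzMap_eq_fourierInt u
  refine ⟨(((2 * Real.pi) ^ (-(d : ℝ) / 2) : ℝ) : ℂ) • v, funext fun ζ => ?_⟩
  simp only [smul_apply, hv, fourierInt, planeWave_neg_right, smul_eq_mul]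
  rfl

theorem opAdj_op_eq_op_adjointProductSymbol (h₁ : ContDiff ℝ ∞ a₁) (h₂ : ContDiff ℝ ∞ a₂)
    (hK : IsCompact K) (h₁K : ∀ q : Phase d, q.1 ∉ K → a₁ q = 0) {C₁ m₁ C m : ℝ}
    (hC₁ : ∀ y ∈ K, ∀ ξ, ‖a₁ (y, ξ)‖ ≤ C₁ * bracket ξ ^ m₁)
    (hC : ∀ ζ ξ, ‖partialFourier (crossAmplitude a₁ a₂ (ζ, 1)) ζ ξ‖ ≤
      C * (bracket ξ ^ m * bracket ζ ^ (-((d : ℝ) + 1))))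
    (u : SchwartzMap (Fin d → ℝ) ℂ) (x : Fin d → ℝ) :
    OpAdj (fun x ξ => a₂ (x, ξ)) (Op (fun x ξ => a₁ (x, ξ)) u) x =
      Op (adjointProductSymbol a₁ a₂) u x := by
  obtain ⟨v, hv⟩ := exists_schwartzMap_eq_fourierHat u
  have hinner (η : Fin d → ℝ) := integral_planeWave_mul_conj_mul_integral h₁.continuous
    h₂.continuous hK h₁K hC₁ v x η
  have houter := integral_integral_planeWave_mul_partialFourier h₁ h₂ hK h₁K hC v x
  have hswap : OpAdj (fun x ξ => a₂ (x, ξ)) (Op (fun x ξ => a₁ (x, ξ)) u) x =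
      (((2 * Real.pi) ^ (-(d : ℝ)) : ℝ) : ℂ) * ∫ η, ∫ y,
        planeWave (x - y) η * (starRingEnd ℂ) (a₂ (y, η)) *
          ((((2 * Real.pi) ^ (-(d : ℝ) / 2) : ℝ) : ℂ) * ∫ ξ, planeWave y ξ * a₁ (y, ξ) * v ξ) := by
    rw [← hv]
    rfl
  rw [hswap]
  simp only [mul_left_comm _ (((2 * Real.pi) ^ (-(d : ℝ) / 2) : ℝ) : ℂ),
    integral_const_mul (((2 * Real.pi) ^ (-(d : ℝ) / 2) : ℝ) : ℂ), hinner, houter]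
  rw [Op, hv, ← integral_const_mul]
  congr 2 with ξ
  rw [adjointProductSymbol_eq_integral, planeWave]
  ring

end OperatorProduct

/-! ### Symbol estimates for the product -/

section SymbolEstimates

variable {d : ℕ} {r m m₁ m₂ : ℝ} {φ : Phase d → ℝ} {a a₁ a₂ : Phase d → ℂ}
  {K : Set (Fin d → ℝ)}

lemma IsOscillatory.fibreDeriv (ha : IsOscillatory φ m a) (hφ : IsPhaseSymbol r φ) (hr : 0 ≤ r)
    (α : Fin d → ℕ) : IsOscillatory φ (m - mOrder α * (1 - r)) (fibreDeriv α a) := by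
  have h := ha.phaseDeriv_map_inr hφ hr (indexList α)
  rwa [length_indexList] at h

lemma IsOscillatory.isAmplitudeFamily_crossAmplitude (ha₁ : IsOscillatory φ m₁ a₁)
    (ha₂ : IsOscillatory φ m₂ a₂) (hφ : IsPhaseSymbol r φ) (hr : r ∈ Set.Icc (0 : ℝ) 1)
    (hK : IsCompact K) (h₁K : ∀ q : Phase d, q.1 ∉ K → a₁ q = 0) :
    IsAmplitudeFamily K r (m₁ + m₂) (|m₁| + |m₂|) (crossAmplitude a₁ a₂) where
  smooth := contDiff_crossAmplitude (ha₁.smooth hφ.smooth) (ha₂.smooth hφ.smooth)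
  eq_zero := crossAmplitude_eq_zero_of_notMem h₁K
  bounds := ha₁.weightedBounds_crossAmplitude ha₂ hφ hr hK

theorem IsOscillatory.isPhaseSymbol_expansionTerm (ha₁ : IsOscillatory φ m₁ a₁)
    (ha₂ : IsOscillatory φ m₂ a₂) (hφ : IsPhaseSymbol r φ) (hr : 0 ≤ r) (α : Fin d → ℕ) :
    IsPhaseSymbol (m₁ + m₂ - mOrder α * (1 - r)) (expansionTerm α a₁ a₂) := by
  have hcount : fibreCount ((indexList α).map Sum.inl) = 0 := by
    simp [fibreCount, List.countP_map]
  have h := ((ha₁.mul_conj (ha₂.fibreDeriv hφ hr α)).deriv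
    ((indexList α).map Sum.inl)).const_mul ((-Complex.I) ^ mOrder α)
  rwa [hcount, Nat.cast_zero, sub_zero, ← add_sub_assoc] at h

lemma IsOscillatory.isRapidSymbolFamily_remainderFamily (ha₁ : IsOscillatory φ m₁ a₁)
    (ha₂ : IsOscillatory φ m₂ a₂) (hφ : IsPhaseSymbol r φ) (hr : r ∈ Set.Ico (0 : ℝ) 1)
    (hK : IsCompact K) (h₁K : ∀ q : Phase d, q.1 ∉ K → a₁ q = 0) (N : ℕ) (α : Fin d → ℕ) :
    IsRapidSymbolFamily (m₁ + m₂ - mOrder α * (1 - r)) (remainderFamily N α a₁ a₂) := by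
  rw [add_sub_assoc]
  exact (ha₁.isAmplitudeFamily_crossAmplitude (ha₂.fibreDeriv hφ hr.1 α) hφ
    (Set.Ico_subset_Icc_self hr) hK h₁K).isRapidSymbolFamily hr hK
    (contDiff_taylorWeight N α) (norm_taylorWeight_le N α)

theorem IsOscillatory.isPhaseSymbol_adjointProductSymbol_sub_sum (ha₁ : IsOscillatory φ m₁ a₁)
    (ha₂ : IsOscillatory φ m₂ a₂) (hφ : IsPhaseSymbol r φ) (hr : r ∈ Set.Ico (0 : ℝ) 1)
    (hK : IsCompact K) (h₁K : ∀ q : Phase d, q.1 ∉ K → a₁ q = 0) {N : ℕ} (hN : 1 ≤ N) :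
    IsPhaseSymbol (m₁ + m₂ - N * (1 - r)) fun q => adjointProductSymbol a₁ a₂ q.1 q.2 -
      ∑ α ∈ mIdxLt d N, (mFactorial α : ℂ)⁻¹ * expansionTerm α a₁ a₂ q := by
  have hrem (α : Fin d → ℕ) :=
    ha₁.isRapidSymbolFamily_remainderFamily ha₂ hφ hr hK h₁K N α
  have hexpand (q : Phase d) := adjointProductSymbol_eq_sum_add_sum (ha₁.smooth hφ.smooth)
    (ha₂.smooth hφ.smooth) hK h₁K hN q.1 q.2 fun α => (hrem α).smoothlyDominated.integrable q
  simp only [hexpand, add_sub_cancel_left]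
  refine (IsPhaseSymbol.sum _ fun α hα => .const_mul ?_ _).const_mul _
  have hint := (hrem α).isPhaseSymbol_integral
  rwa [mem_mIdxEq.1 hα] at hint

theorem IsOscillatory.isPhaseSymbol_adjointProductSymbol (ha₁ : IsOscillatory φ m₁ a₁)
    (ha₂ : IsOscillatory φ m₂ a₂) (hφ : IsPhaseSymbol r φ) (hr : r ∈ Set.Ico (0 : ℝ) 1)
    (hK : IsCompact K) (h₁K : ∀ q : Phase d, q.1 ∉ K → a₁ q = 0) :
    IsPhaseSymbol (m₁ + m₂) fun q => adjointProductSymbol a₁ a₂ q.1 q.2 := by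
  have hgain (k : ℕ) : m₁ + m₂ - k * (1 - r) ≤ m₁ + m₂ :=
    sub_le_self _ (mul_nonneg k.cast_nonneg (sub_nonneg.2 hr.2.le))
  have hsum := IsPhaseSymbol.sum (mIdxLt d 1) fun α _ =>
    ((ha₁.isPhaseSymbol_expansionTerm ha₂ hφ hr.1 α).mono (hgain _)).const_mul
      (mFactorial α : ℂ)⁻¹
  have hdiff := (ha₁.isPhaseSymbol_adjointProductSymbol_sub_sum ha₂ hφ hr hK h₁K le_rfl).mono
    (hgain 1)
  simpa only [sub_add_cancel] using hdiff.add hsum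

theorem IsOscillatory.opAdj_op_eq_op_adjointProductSymbol (ha₁ : IsOscillatory φ m₁ a₁)
    (ha₂ : IsOscillatory φ m₂ a₂) (hφ : IsPhaseSymbol r φ) (hr : r ∈ Set.Ico (0 : ℝ) 1)
    (hK : IsCompact K) (h₁K : ∀ q : Phase d, q.1 ∉ K → a₁ q = 0)
    (u : SchwartzMap (Fin d → ℝ) ℂ) (x : Fin d → ℝ) :
    OpAdj (fun x ξ => a₂ (x, ξ)) (Op (fun x ξ => a₁ (x, ξ)) u) x =
      Op (adjointProductSymbol a₁ a₂) u x := by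
  obtain ⟨C₁, -, hC₁⟩ := ha₁.exists_norm_le hK
  obtain ⟨C, -, hC⟩ := (ha₁.isAmplitudeFamily_crossAmplitude ha₂ hφ (Set.Ico_subset_Icc_self hr)
    hK h₁K).exists_norm_partialFourier_le hr hK (d + 1) []
  refine _root_.opAdj_op_eq_op_adjointProductSymbol (ha₁.smooth hφ.smooth) (ha₂.smooth hφ.smooth)
    hK h₁K hC₁ (C := C) (m := m₁ + m₂) (fun ζ ξ => ?_) u x
  simpa [phaseDeriv_nil] using hC (ζ, 1) (Set.right_mem_Icc.2 zero_le_one) ξ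

end SymbolEstimates

theorem statement5_general {d : ℕ} (r m₁ m₂ : ℝ) (hr : r ∈ Set.Ico (0 : ℝ) 1)
    (Φ : (Fin d → ℝ) → (Fin d → ℝ) → ℝ)
    (b₁ b₂ : (Fin d → ℝ) → (Fin d → ℝ) → ℂ)
    (hΦ : IsSymbol Set.univ r 1 0 fun x ξ => ((Φ x ξ : ℝ) : ℂ))
    (hb₁ : IsSymbol Set.univ m₁ 1 0 b₁)
    (hb₂ : IsSymbol Set.univ m₂ 1 0 b₂)
    (a₁ a₂ : (Fin d → ℝ) → (Fin d → ℝ) → ℂ)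
    (ha₁ : a₁ = fun x ξ => Complex.exp (Complex.I * (Φ x ξ : ℂ)) * b₁ x ξ)
    (ha₂ : a₂ = fun x ξ => Complex.exp (Complex.I * (Φ x ξ : ℂ)) * b₂ x ξ)
    (K₀ : Set (Fin d → ℝ)) (hK₀ : IsCompact K₀)
    (hsupp : ∀ x ∉ K₀, ∀ ξ : Fin d → ℝ, a₁ x ξ = 0) :
    ∃ h : (Fin d → ℝ) → (Fin d → ℝ) → ℂ,
      IsSymbol Set.univ (m₁ + m₂) 1 0 h ∧
      (∀ x ξ : Fin d → ℝ,
        h x ξ = (((2 * Real.pi) ^ (-(d : ℝ)) : ℝ) : ℂ) *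
          ∫ ζ : Fin d → ℝ, ∫ y : Fin d → ℝ,
            a₁ y ξ * (starRingEnd ℂ) (a₂ y (ξ + ζ)) *
              Complex.exp (Complex.I * (dotp (x - y) ζ : ℂ))) ∧
      (∀ u : SchwartzMap (Fin d → ℝ) ℂ, ∀ x : Fin d → ℝ,
        OpAdj a₂ (Op a₁ ⇑u) x = Op h (⇑u) x) ∧
      (∀ α : Fin d → ℕ,
        IsSymbol Set.univ (m₁ + m₂ - (mOrder α : ℝ) * (1 - r)) 1 0
          (fun x ξ => (-Complex.I) ^ (mOrder α) *
            mpderiv α (fun y => a₁ y ξ *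
              (starRingEnd ℂ) (mpderiv α (fun η => a₂ y η) ξ)) x)) ∧
      (∀ N : ℕ, 1 ≤ N →
        IsSymbol Set.univ (m₁ + m₂ - (N : ℝ) * (1 - r)) 1 0
          (fun x ξ => h x ξ - ∑ α ∈ mIdxLt d N, (mFactorial α : ℂ)⁻¹ *
            ((-Complex.I) ^ (mOrder α) *
              mpderiv α (fun y => a₁ y ξ *
                (starRingEnd ℂ) (mpderiv α (fun η => a₂ y η) ξ)) x))) := by
  have hφ : IsPhaseSymbol r fun q : Phase d => Φ q.1 q.2 :=
    (isSymbol_iff_isPhaseSymbol.1 hΦ).clm_comp Complex.reCLM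
  have hosc₁ : IsOscillatory (fun q => Φ q.1 q.2) m₁ fun q : Phase d => a₁ q.1 q.2 :=
    ⟨_, isSymbol_iff_isPhaseSymbol.1 hb₁, by rw [ha₁]⟩
  have hosc₂ : IsOscillatory (fun q => Φ q.1 q.2) m₂ fun q : Phase d => a₂ q.1 q.2 :=
    ⟨_, isSymbol_iff_isPhaseSymbol.1 hb₂, by rw [ha₂]⟩
  have hsupp₁ (q : Phase d) (hq : q.1 ∉ K₀) : a₁ q.1 q.2 = 0 := hsupp q.1 hq q.2
  have hterm := expansionTerm_eq_mpderiv (hosc₁.smooth hφ.smooth) (hosc₂.smooth hφ.smooth)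
  refine ⟨adjointProductSymbol (fun q => a₁ q.1 q.2) fun q => a₂ q.1 q.2,
    isSymbol_iff_isPhaseSymbol.2
      (hosc₁.isPhaseSymbol_adjointProductSymbol hosc₂ hφ hr hK₀ hsupp₁),
    fun _ _ => rfl, hosc₁.opAdj_op_eq_op_adjointProductSymbol hosc₂ hφ hr hK₀ hsupp₁,
    fun α => ?_, fun N hN => ?_⟩
  · simp only [← hterm]
    exact isSymbol_iff_isPhaseSymbol.2 (hosc₁.isPhaseSymbol_expansionTerm hosc₂ hφ hr.1 α)
  · simp only [← hterm]
    exact isSymbol_iff_isPhaseSymbol.2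
      (hosc₁.isPhaseSymbol_adjointProductSymbol_sub_sum hosc₂ hφ hr hK₀ hsupp₁ hN)

/-- Theorem 2.6 / `bc1`: for `a_j = e^{iΦ}b_j ∈ 𝒞^{m_j}(Φ)` compactly
supported in `x`, the product `A₂*A₁` is a PDO with symbol `h ∈ S^{m₁+m₂}`, given by the
explicit double integral, admitting the expansion `h ∼ Σ (α!)⁻¹ D_x^α (a₁ conj(∂_ξ^α a₂))`. -/
theorem statement5 {d : ℕ} (r m₁ m₂ : ℝ) (hr : r ∈ Set.Ico (0 : ℝ) 1)
    (Φ : (Fin d → ℝ) → (Fin d → ℝ) → ℝ)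
    (b₁ b₂ : (Fin d → ℝ) → (Fin d → ℝ) → ℂ)
    (hΦ : IsSymbol Set.univ r 1 0 fun x ξ => ((Φ x ξ : ℝ) : ℂ))
    (hb₁ : IsSymbol Set.univ m₁ 1 0 b₁)
    (hb₂ : IsSymbol Set.univ m₂ 1 0 b₂)
    (a₁ a₂ : (Fin d → ℝ) → (Fin d → ℝ) → ℂ)
    (ha₁ : a₁ = fun x ξ => Complex.exp (Complex.I * (Φ x ξ : ℂ)) * b₁ x ξ)
    (ha₂ : a₂ = fun x ξ => Complex.exp (Complex.I * (Φ x ξ : ℂ)) * b₂ x ξ)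
    (K₀ : Set (Fin d → ℝ)) (hK₀ : IsCompact K₀)
    (hsupp : ∀ x ∉ K₀, ∀ ξ : Fin d → ℝ, a₁ x ξ = 0 ∧ a₂ x ξ = 0) :
    ∃ h : (Fin d → ℝ) → (Fin d → ℝ) → ℂ,
      IsSymbol Set.univ (m₁ + m₂) 1 0 h ∧
      -- the explicit formula for `h`
      (∀ x ξ : Fin d → ℝ,
        h x ξ = (((2 * Real.pi) ^ (-(d : ℝ)) : ℝ) : ℂ) *
          ∫ ζ : Fin d → ℝ, ∫ y : Fin d → ℝ,
            a₁ y ξ * (starRingEnd ℂ) (a₂ y (ξ + ζ)) *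
              Complex.exp (Complex.I * (dotp (x - y) ζ : ℂ))) ∧
      (∀ u : SchwartzMap (Fin d → ℝ) ℂ, ∀ x : Fin d → ℝ,
        OpAdj a₂ (Op a₁ ⇑u) x = Op h (⇑u) x) ∧
      (∀ α : Fin d → ℕ,
        IsSymbol Set.univ (m₁ + m₂ - (mOrder α : ℝ) * (1 - r)) 1 0
          (fun x ξ => (-Complex.I) ^ (mOrder α) *
            mpderiv α (fun y => a₁ y ξ *
              (starRingEnd ℂ) (mpderiv α (fun η => a₂ y η) ξ)) x)) ∧
      (∀ N : ℕ, 1 ≤ N →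
        IsSymbol Set.univ (m₁ + m₂ - (N : ℝ) * (1 - r)) 1 0
          (fun x ξ => h x ξ - ∑ α ∈ mIdxLt d N, (mFactorial α : ℂ)⁻¹ *
            ((-Complex.I) ^ (mOrder α) *
              mpderiv α (fun y => a₁ y ξ *
                (starRingEnd ℂ) (mpderiv α (fun η => a₂ y η) ξ)) x))) :=
  statement5_general r m₁ m₂ hr Φ b₁ b₂ hΦ hb₁ hb₂ a₁ a₂ ha₁ ha₂ K₀ hK₀ fun x hx ξ =>
    (hsupp x hx ξ).1
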